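/- arXiv:2011.10387 — 8 statements merged into one kernel-verified Lean document; each statement's English description precedes it below -/
import Mathlib

section
/- Define a : ℕ → ℕ by a(0) = 1 and a(i+1) = 10^{a(i)}, and let c = ∑_{i=0}^∞ 10^{-a(i)} (a real number). Let α = 2^c and β = 2. Then α > 1, α and β are multiplicatively independent (i.e., for all integers s, t, if α^s · β^t = 1 then s = 0 and t = 0), and the set {(n, m) ∈ ℕ × ℕ : n ≥ 1, m ≥ 1, |α^n − β^m| ≤ 1} is infinite. -/
/-!
Truncating the series `c = ∑ b ^ (-a i)` after index `k` leaves a rational with denominator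
`n = b ^ a k = a (k + 1)` and numerator `m`, while the tail is of order `b ^ (-n)`. Hence
`0 < n * c - m ≤ C * n / b ^ n`. Since `n * c - m` is nonzero and tends to `0`, `c` is irrational,
which gives multiplicative independence of `β ^ c` and `β`. Moreover `(β ^ c) ^ n - β ^ m` is at
most `(β ^ c) ^ n * log β * (n * c - m)`, hence at most a constant times `n * (β ^ c / b) ^ n`,
which tends to `0` as soon as `β ^ c < b`.
-/

open Filter Topology

theorem irrational_of_tendsto_mul_sub {ι : Type*} {l : Filter ι} {x : ℝ} {q p : ι → ℤ}
    (hne : ∃ᶠ i in l, (q i : ℝ) * x - p i ≠ 0)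
    (hlim : Tendsto (fun i ↦ (q i : ℝ) * x - p i) l (𝓝 0)) : Irrational x := by
  rintro ⟨r, rfl⟩
  have hscaled : Tendsto (fun i ↦ (r.den : ℝ) * (q i * r - p i)) l (𝓝 0) := by
    simpa using hlim.const_mul (r.den : ℝ)
  have hsmall := hscaled.abs.eventually_lt_const (abs_zero.trans_lt (one_pos (α := ℝ)))
  obtain ⟨i, hi, hlt⟩ := (hne.and_eventually hsmall).exists
  have hint : (r.den : ℝ) * (q i * r - p i) = ((q i * r.num - r.den * p i : ℤ) : ℝ) := by
    have hr : (r.den : ℝ) * r = r.num := by exact_mod_cast r.den_mul_eq_num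
    push_cast
    linear_combination (q i : ℝ) * hr
  have hzero : q i * r.num - r.den * p i = 0 := by
    rw [hint] at hlt
    exact Int.abs_lt_one_iff.mp (by exact_mod_cast hlt)
  rw [hzero, Int.cast_zero] at hint
  exact mul_ne_zero (Nat.cast_ne_zero.mpr r.den_ne_zero) hi hint

theorem eq_zero_of_rpow_zpow_mul_zpow_eq_one {β c : ℝ} (hβ : 0 < β) (hβ' : β ≠ 1)
    (hc : Irrational c) {s t : ℤ} (h : (β ^ c) ^ s * β ^ t = 1) : s = 0 ∧ t = 0 := by
  have hexp : c * s + t = 0 := by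
    rw [← Real.rpow_mul_intCast hβ.le, ← Real.rpow_intCast, ← Real.rpow_add hβ] at h
    exact (Real.rpow_right_inj hβ hβ').mp (h.trans (Real.rpow_zero β).symm)
  have hs : s = 0 := by
    by_contra hs
    exact ((hc.mul_intCast hs).add_intCast t).ne_zero hexp
  subst hs
  simpa using hexp

theorem rpow_sub_rpow_le {β : ℝ} (hβ : 0 < β) (x y : ℝ) :
    β ^ x - β ^ y ≤ β ^ x * (Real.log β * (x - y)) := by
  have hexp : 1 - Real.log β * (x - y) ≤ β ^ (y - x) := by
    rw [Real.rpow_def_of_pos hβ]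
    linarith [Real.add_one_le_exp (Real.log β * (y - x))]
  have hmul := mul_le_mul_of_nonneg_left hexp (Real.rpow_pos_of_pos hβ x).le
  rw [← Real.rpow_add hβ, add_sub_cancel] at hmul
  linarith

section LacunarySeries

variable {b : ℝ} {a : ℕ → ℕ}

theorem summable_zpow_neg_of_strictMono (hb : 1 < b) (ha : StrictMono a) :
    Summable fun i ↦ b ^ (-(a i : ℤ)) := by
  simpa [Function.comp_def] using
    (summable_geometric_of_lt_one (by positivity) (inv_lt_one_of_one_lt₀ hb)).comp_injective
      ha.injective

theorem tsum_zpow_neg_pos (hb : 1 < b) (ha : StrictMono a) :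
    0 < ∑' i, b ^ (-(a i : ℤ)) :=
  (summable_zpow_neg_of_strictMono hb ha).tsum_pos (fun _ ↦ by positivity) 0 (by positivity)

theorem tsum_zpow_neg_le (hb : 1 < b) (ha : StrictMono a) :
    ∑' i, b ^ (-(a i : ℤ)) ≤ (b ^ a 0)⁻¹ * (1 - b⁻¹)⁻¹ := by
  have hterm (i : ℕ) : b ^ (-(a i : ℤ)) ≤ (b ^ a 0)⁻¹ * b⁻¹ ^ i := by
    rw [zpow_neg, zpow_natCast, inv_pow, ← mul_inv, ← pow_add]
    gcongr
    · exact hb.le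
    · simpa [add_comm] using ha.add_le_nat i 0
  have hb' : b⁻¹ < 1 := inv_lt_one_of_one_lt₀ hb
  have hgeom := summable_geometric_of_lt_one (by positivity) hb'
  calc ∑' i, b ^ (-(a i : ℤ)) ≤ ∑' i, (b ^ a 0)⁻¹ * b⁻¹ ^ i :=
        (summable_zpow_neg_of_strictMono hb ha).tsum_le_tsum hterm (hgeom.mul_left _)
    _ = (b ^ a 0)⁻¹ * (1 - b⁻¹)⁻¹ := by
        rw [tsum_mul_left, tsum_geometric_of_lt_one (by positivity) hb']

theorem tsum_zpow_neg_le_one (hb : 2 ≤ b) (ha : StrictMono a) (ha₀ : 1 ≤ a 0) :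
    ∑' i, b ^ (-(a i : ℤ)) ≤ 1 := by
  have hb₁ : 1 < b := one_lt_two.trans_le hb
  have hinv : b⁻¹ < 1 := inv_lt_one_of_one_lt₀ hb₁
  calc ∑' i, b ^ (-(a i : ℤ)) ≤ (b ^ a 0)⁻¹ * (1 - b⁻¹)⁻¹ := tsum_zpow_neg_le hb₁ ha
    _ ≤ b⁻¹ * (1 - b⁻¹)⁻¹ := by
        gcongr
        exact le_self_pow₀ hb₁.le (Nat.one_le_iff_ne_zero.mp ha₀)
    _ = (b - 1)⁻¹ := by rw [← mul_inv, mul_sub, mul_one, mul_inv_cancel₀ (by positivity)]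
    _ ≤ 1 := inv_le_one_of_one_le₀ (by linarith)

end LacunarySeries

section Truncation

variable {b : ℕ} {a : ℕ → ℕ}

/-- The numerator over `b ^ a k` of the partial sum `∑ i ≤ k, b ^ (-a i)`; the subtraction in the
exponent does not truncate when `a` is monotone. -/
def truncationNum (b : ℕ) (a : ℕ → ℕ) (k : ℕ) : ℕ :=
  ∑ i ∈ Finset.range (k + 1), b ^ (a k - a i)

theorem one_le_truncationNum (b : ℕ) (a : ℕ → ℕ) (k : ℕ) : 1 ≤ truncationNum b a k := by
  simp [truncationNum, Finset.sum_range_succ]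

theorem pow_mul_sum_eq_truncationNum (hb : b ≠ 0) (ha : Monotone a) (k : ℕ) :
    (b : ℝ) ^ a k * ∑ i ∈ Finset.range (k + 1), (b : ℝ) ^ (-(a i : ℤ)) = truncationNum b a k := by
  rw [truncationNum, Finset.mul_sum]
  push_cast
  refine Finset.sum_congr rfl fun i hi ↦ ?_
  have hik : a i ≤ a k := ha (Nat.lt_succ_iff.mp (Finset.mem_range.mp hi))
  rw [zpow_neg, zpow_natCast, pow_sub₀ _ (Nat.cast_ne_zero.mpr hb) hik]

theorem pow_mul_tsum_sub_truncationNum (hb : 1 < b) (ha : StrictMono a) (k : ℕ) :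
    (b : ℝ) ^ a k * ∑' i, (b : ℝ) ^ (-(a i : ℤ)) - truncationNum b a k =
      (b : ℝ) ^ a k * ∑' i, (b : ℝ) ^ (-(a (i + (k + 1)) : ℤ)) := by
  have hsum := summable_zpow_neg_of_strictMono (Nat.one_lt_cast.mpr hb : (1 : ℝ) < b) ha
  rw [← hsum.sum_add_tsum_nat_add (k + 1), mul_add,
    pow_mul_sum_eq_truncationNum (by lia) ha.monotone, add_sub_cancel_left]

theorem pow_mul_tsum_sub_truncationNum_pos (hb : 1 < b) (ha : StrictMono a) (k : ℕ) :
    0 < (b : ℝ) ^ a k * ∑' i, (b : ℝ) ^ (-(a i : ℤ)) - truncationNum b a k := by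
  have htail := tsum_zpow_neg_pos (Nat.one_lt_cast.mpr hb : (1 : ℝ) < b)
    (ha.comp (add_left_strictMono (a := k + 1)))
  rw [pow_mul_tsum_sub_truncationNum hb ha]
  exact mul_pos (by positivity) htail

theorem pow_mul_tsum_sub_truncationNum_le (hb : 1 < b) (ha : StrictMono a) (k : ℕ) :
    (b : ℝ) ^ a k * ∑' i, (b : ℝ) ^ (-(a i : ℤ)) - truncationNum b a k ≤
      (1 - (b : ℝ)⁻¹)⁻¹ * ((b : ℝ) ^ a k * ((b : ℝ)⁻¹) ^ a (k + 1)) := by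
  have htail := tsum_zpow_neg_le (Nat.one_lt_cast.mpr hb : (1 : ℝ) < b)
    (ha.comp (add_left_strictMono (a := k + 1)))
  simp only [Function.comp_apply, zero_add] at htail
  rw [pow_mul_tsum_sub_truncationNum hb ha, inv_pow, mul_left_comm, mul_comm (1 - (b : ℝ)⁻¹)⁻¹]
  gcongr

end Truncation

section PowerTower

variable {b : ℕ} {a : ℕ → ℕ}

theorem strictMono_of_succ_eq_pow (hb : 1 < b) (ha : ∀ i, a (i + 1) = b ^ a i) : StrictMono a :=
  strictMono_nat_of_lt_succ fun i ↦ ha i ▸ Nat.lt_pow_self hb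

theorem mul_tsum_sub_truncationNum_pos (hb : 1 < b) (ha : ∀ i, a (i + 1) = b ^ a i) (k : ℕ) :
    0 < a (k + 1) * ∑' i, (b : ℝ) ^ (-(a i : ℤ)) - truncationNum b a k := by
  rw [ha k, Nat.cast_pow]
  exact pow_mul_tsum_sub_truncationNum_pos hb (strictMono_of_succ_eq_pow hb ha) k

theorem mul_tsum_sub_truncationNum_le (hb : 1 < b) (ha : ∀ i, a (i + 1) = b ^ a i) (k : ℕ) :
    a (k + 1) * ∑' i, (b : ℝ) ^ (-(a i : ℤ)) - truncationNum b a k ≤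
      (1 - (b : ℝ)⁻¹)⁻¹ * (a (k + 1) * ((b : ℝ)⁻¹) ^ a (k + 1)) := by
  have hden : (a (k + 1) : ℝ) = (b : ℝ) ^ a k := by rw [ha, Nat.cast_pow]
  rw [hden]
  exact pow_mul_tsum_sub_truncationNum_le hb (strictMono_of_succ_eq_pow hb ha) k

theorem tendsto_succ_atTop_of_succ_eq_pow (hb : 1 < b) (ha : ∀ i, a (i + 1) = b ^ a i) :
    Tendsto (fun k ↦ a (k + 1)) atTop atTop :=
  (tendsto_add_atTop_iff_nat 1).mpr (strictMono_of_succ_eq_pow hb ha).tendsto_atTop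

theorem irrational_tsum_zpow_neg_of_succ_eq_pow (hb : 1 < b) (ha : ∀ i, a (i + 1) = b ^ a i) :
    Irrational (∑' i, (b : ℝ) ^ (-(a i : ℤ))) := by
  have hpos := mul_tsum_sub_truncationNum_pos hb ha
  have hinv : (b : ℝ)⁻¹ < 1 := inv_lt_one_of_one_lt₀ (Nat.one_lt_cast.mpr hb)
  have hbound := ((tendsto_self_mul_const_pow_of_lt_one (by positivity) hinv).comp
    (tendsto_succ_atTop_of_succ_eq_pow hb ha)).const_mul (1 - (b : ℝ)⁻¹)⁻¹
  rw [mul_zero] at hbound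
  refine irrational_of_tendsto_mul_sub (l := atTop) (q := fun k ↦ (a (k + 1) : ℤ))
    (p := fun k ↦ (truncationNum b a k : ℤ)) ?_ ?_
  · exact .of_forall fun k ↦ by exact_mod_cast (hpos k).ne'
  · exact_mod_cast squeeze_zero (fun k ↦ (hpos k).le) (mul_tsum_sub_truncationNum_le hb ha) hbound

theorem tendsto_rpow_pow_sub_pow_truncationNum (hb : 1 < b) (ha : ∀ i, a (i + 1) = b ^ a i)
    {c : ℝ} (hc : c = ∑' i, (b : ℝ) ^ (-(a i : ℤ))) {β : ℝ} (hβ : 1 ≤ β) (hβc : β ^ c < b) :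
    Tendsto (fun k ↦ (β ^ c) ^ a (k + 1) - β ^ truncationNum b a k) atTop (𝓝 0) := by
  have hβ₀ : 0 < β := one_pos.trans_le hβ
  have hpow (k : ℕ) : (β ^ c) ^ a (k + 1) = β ^ (a (k + 1) * c) := by
    rw [mul_comm, Real.rpow_mul_natCast hβ₀.le]
  have hratio : β ^ c / b < 1 := (div_lt_one (by positivity)).mpr hβc
  have hbound := ((tendsto_self_mul_const_pow_of_lt_one (by positivity) hratio).comp
    (tendsto_succ_atTop_of_succ_eq_pow hb ha)).const_mul (Real.log β * (1 - (b : ℝ)⁻¹)⁻¹)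
  rw [mul_zero] at hbound
  refine squeeze_zero (fun k ↦ ?_) (fun k ↦ ?_) hbound
  · rw [hpow, ← Real.rpow_natCast, sub_nonneg]
    exact Real.rpow_le_rpow_of_exponent_le hβ
      (sub_pos.mp (hc ▸ mul_tsum_sub_truncationNum_pos hb ha k)).le
  · have hlog := Real.log_nonneg hβ
    calc (β ^ c) ^ a (k + 1) - β ^ truncationNum b a k
        ≤ (β ^ c) ^ a (k + 1) * (Real.log β * (a (k + 1) * c - truncationNum b a k)) := by
          simpa only [hpow, Real.rpow_natCast] using
            rpow_sub_rpow_le hβ₀ (a (k + 1) * c) (truncationNum b a k)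
      _ ≤ (β ^ c) ^ a (k + 1) *
            (Real.log β * ((1 - (b : ℝ)⁻¹)⁻¹ * (a (k + 1) * ((b : ℝ)⁻¹) ^ a (k + 1)))) := by
          gcongr
          exact hc ▸ mul_tsum_sub_truncationNum_le hb ha k
      _ = Real.log β * (1 - (b : ℝ)⁻¹)⁻¹ * (a (k + 1) * (β ^ c / b) ^ a (k + 1)) := by
          rw [div_eq_mul_inv, mul_pow]
          ring

end PowerTower

theorem stmt_0_general (b : ℕ) (hb : 1 < b) (a : ℕ → ℕ) (ha : ∀ i, a (i + 1) = b ^ a i)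
    (c : ℝ) (hc : c = ∑' i : ℕ, (b : ℝ) ^ (-(a i : ℤ)))
    (β : ℝ) (hβ : 1 < β) (hβc : β ^ c < b) :
    1 < β ^ c ∧
    (∀ s t : ℤ, (β ^ c) ^ s * β ^ t = 1 → s = 0 ∧ t = 0) ∧
    ∀ δ > 0, {p : ℕ × ℕ | 1 ≤ p.1 ∧ 1 ≤ p.2 ∧ |(β ^ c) ^ p.1 - β ^ p.2| ≤ δ}.Infinite := by
  have hmono : StrictMono a := strictMono_of_succ_eq_pow hb ha
  have hc₀ : 0 < c := hc ▸ tsum_zpow_neg_pos (Nat.one_lt_cast.mpr hb) hmono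
  have hirr : Irrational c := hc ▸ irrational_tsum_zpow_neg_of_succ_eq_pow hb ha
  refine ⟨Real.one_lt_rpow hβ hc₀, fun s t ↦ eq_zero_of_rpow_zpow_mul_zpow_eq_one
    (one_pos.trans hβ) hβ.ne' hirr, fun δ hδ ↦ ?_⟩
  have hclose : {k | |(β ^ c) ^ a (k + 1) - β ^ truncationNum b a k| ≤ δ}.Infinite := by
    have hlim := (tendsto_rpow_pow_sub_pow_truncationNum hb ha hc hβ.le hβc).abs
    rw [abs_zero] at hlim
    exact Nat.frequently_atTop_iff_infinite.mp (hlim.eventually_le_const hδ).frequently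
  have hinj : Function.Injective fun k ↦ (a (k + 1), truncationNum b a k) := fun i j hij ↦
    Nat.succ_injective (hmono.injective (Prod.mk.inj hij).1)
  refine (hclose.image hinj.injOn).mono ?_
  rintro _ ⟨k, hk, rfl⟩
  exact ⟨(Nat.zero_le _).trans_lt (hmono k.lt_succ_self), one_le_truncationNum b a k, hk⟩

theorem stmt_0 (a : ℕ → ℕ) (ha0 : a 0 = 1) (ha : ∀ i, a (i + 1) = 10 ^ a i)
    (c : ℝ) (hc : c = ∑' i : ℕ, (10 : ℝ) ^ (-(a i : ℤ)))
    (α β : ℝ) (hα : α = (2 : ℝ) ^ c) (hβ : β = 2) :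
    1 < α ∧
    (∀ s t : ℤ, α ^ s * β ^ t = 1 → s = 0 ∧ t = 0) ∧
    {p : ℕ × ℕ | 1 ≤ p.1 ∧ 1 ≤ p.2 ∧ |α ^ p.1 - β ^ p.2| ≤ 1}.Infinite := by
  have hc₁ : c ≤ 1 :=
    hc ▸ tsum_zpow_neg_le_one (by norm_num) (strictMono_of_succ_eq_pow (by norm_num) ha) ha0.ge
  have hlt : (2 : ℝ) ^ c < 10 :=
    (Real.rpow_le_rpow_of_exponent_le one_le_two hc₁).trans_lt (by norm_num)
  obtain ⟨hone, hindep, hinf⟩ := stmt_0_general 10 (by norm_num) a ha c (by exact_mod_cast hc) 2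
    one_lt_two (by exact_mod_cast hlt)
  subst hα hβ
  exact ⟨hone, hindep, hinf 1 one_pos⟩
end

section
/- There exist real numbers α and β with α > 1 and β > 1 which are multiplicatively independent (i.e., for all integers s, t, if α^s · β^t = 1 then s = 0 and t = 0) and such that the set {(n, m) ∈ ℕ × ℕ : n ≥ 1, m ≥ 1, |α^n − β^m| ≤ 1} is infinite. -/
/-!
For a fixed real `α > 1`, the reals `β > 1` satisfying infinitely many exact equations
`α ^ n = β ^ m` are the powers of `α` with positive rational exponent, and these are dense in
`(1, ∞)`. Being close to such an equation is an open condition on `β`, so by the Baire category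
theorem a generic `β > 1` makes `|α ^ n - β ^ m|` small for infinitely many `(n, m)`. A generic `β`
also has `logb α β` irrational, which makes `α` and `β` multiplicatively independent.
-/

open Filter Set

/-- The elements `a` and `b` are multiplicatively independent: the only relation `a ^ s * b ^ t = 1`
with integer exponents is the trivial one. A `DivInvMonoid` covers both groups and fields; in a
field the notion is meant for nonzero `a` and `b`, since `0 ^ s = 0` also for `s < 0`. -/
def MultiplicativelyIndependent {G : Type*} [DivInvMonoid G] (a b : G) : Prop :=
  ∀ s t : ℤ, a ^ s * b ^ t = 1 → s = 0 ∧ t = 0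

theorem multiplicativelyIndependent_of_irrational_logb {α β : ℝ} (h : Irrational (Real.logb α β)) :
    MultiplicativelyIndependent α β := by
  have hlog : Real.log β ≠ 0 ∧ Real.log α ≠ 0 := div_ne_zero_iff.1 h.ne_zero
  have hα : α ≠ 0 := fun hα ↦ hlog.2 (by simp [hα])
  have hβ : β ≠ 0 := fun hβ ↦ hlog.1 (by simp [hβ])
  intro s t hst
  have hrel : s * Real.log α + t * Real.log β = 0 := by
    simpa only [Real.log_mul (zpow_ne_zero s hα) (zpow_ne_zero t hβ), Real.log_zpow, Real.log_one]
      using congrArg Real.log hst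
  have ht : t = 0 := by
    by_contra ht
    refine (h.mul_intCast ht).ne_int (-s) ?_
    rw [Real.logb, div_mul_eq_mul_div, div_eq_iff hlog.2]
    push_cast
    linarith
  have hs : (s : ℝ) = 0 := by simpa [ht, hlog.2] using hrel
  exact ⟨mod_cast hs, ht⟩

theorem eventually_residual_irrational_logb {α : ℝ} (hα : 0 < α) (hα' : α ≠ 1) :
    ∀ᶠ β in residual ℝ, Irrational (Real.logb α β) := by
  have hcount : {β : ℝ | Irrational (Real.logb α β)}ᶜ.Countable := by
    refine (countable_iUnion fun q : ℚ ↦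
      (Set.toFinite {0, α ^ (q : ℝ), -α ^ (q : ℝ)}).countable).mono fun β hβ ↦ ?_
    obtain ⟨q, hq⟩ := not_not.1 hβ
    refine mem_iUnion.2 ⟨q, or_iff_not_imp_left.2 fun hβ0 ↦ ?_⟩
    have habs : |β| = α ^ (q : ℝ) := by rw [hq, Real.rpow_logb_eq_abs hα hα' hβ0]
    exact eq_or_eq_neg_of_abs_eq habs
  have hGδ := hcount.isGδ_compl
  have hdense := hcount.dense_compl ℝ
  rw [compl_compl] at hGδ hdense
  exact residual_of_dense_Gδ hGδ hdense

theorem eventually_residual_infinite_of_mem_closure {X ι : Type*} [TopologicalSpace X] [Countable ι]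
    {V : ι → Set X} (hV : ∀ i, IsOpen (V i)) :
    ∀ᶠ x in residual X, x ∈ closure {x | {i | x ∈ V i}.Infinite} → {i | x ∈ V i}.Infinite := by
  set A : Set X := {x | {i | x ∈ V i}.Infinite}
  let U (s : Finset ι) : Set X := ⋃ i ∉ s, V i
  have hAU (s : Finset ι) : A ⊆ U s := fun x hx ↦ by
    obtain ⟨i, hi, his⟩ := hx.exists_notMem_finset s
    exact mem_biUnion his hi
  -- The exterior of `A` makes the open set `U s`, which is only dense near `A`, dense everywhere.
  have hres (s : Finset ι) : U s ∪ (closure A)ᶜ ∈ residual X := by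
    refine residual_of_dense_open
      ((isOpen_biUnion fun i _ ↦ hV i).union isClosed_closure.isOpen_compl) ?_
    rw [dense_iff_closure_eq, closure_union, ← univ_subset_iff, ← union_compl_self (closure A)]
    exact union_subset_union (closure_mono (hAU s)) subset_closure
  filter_upwards [countable_iInter_mem.2 hres] with x hx hxA hfin
  have hxU : x ∈ U hfin.toFinset := (mem_iInter.1 hx _).resolve_right (not_not_intro hxA)
  obtain ⟨i, hi, hxi⟩ := mem_iUnion₂.1 hxU
  exact hi (hfin.mem_toFinset.2 hxi)

theorem exists_mem_Ioo_pow_eq_pow {α a b : ℝ} (hα : 1 < α) (ha : 1 ≤ a) (hab : a < b) :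
    ∃ β ∈ Ioo a b, ∃ n m : ℕ, 0 < n ∧ 0 < m ∧ α ^ n = β ^ m := by
  have ha0 : 0 < a := one_pos.trans_le ha
  obtain ⟨q, haq, hqb⟩ := exists_rat_btwn (Real.logb_lt_logb hα ha0 hab)
  have hq : 0 < q := mod_cast (Real.logb_nonneg hα ha).trans_lt haq
  obtain ⟨n, hn⟩ := Int.eq_ofNat_of_zero_le (Rat.num_pos.2 hq).le
  have hqn : (q : ℝ) * q.den = n := by exact_mod_cast hn ▸ Rat.mul_den_eq_num q
  refine ⟨α ^ (q : ℝ), ⟨(Real.logb_lt_iff_lt_rpow hα ha0).1 haq,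
    (Real.lt_logb_iff_rpow_lt hα (ha0.trans hab)).1 hqb⟩, n, q.den, ?_, q.den_pos, ?_⟩
  · have := Rat.num_pos.2 hq
    omega
  · rw [← Real.rpow_mul_natCast (one_pos.trans hα).le, hqn, Real.rpow_natCast]

theorem infinite_setOf_pow_eq_pow {M : Type*} [Monoid M] {a b : M} {n m : ℕ} (hn : 0 < n)
    (hm : 0 < m) (h : a ^ n = b ^ m) :
    {p : ℕ × ℕ | 1 ≤ p.1 ∧ 1 ≤ p.2 ∧ a ^ p.1 = b ^ p.2}.Infinite := by
  refine infinite_of_injective_forall_mem (f := fun k : ℕ ↦ (n * (k + 1), m * (k + 1))) ?_ fun k ↦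
    ⟨Nat.mul_pos hn k.succ_pos, Nat.mul_pos hm k.succ_pos, ?_⟩
  · intro k l hkl
    simpa [hn.ne'] using congrArg Prod.fst hkl
  · simp only [pow_mul, h]

theorem Ioi_one_subset_closure_setOf_infinite_pow_eq_pow {α : ℝ} (hα : 1 < α) :
    Ioi 1 ⊆ closure {β : ℝ | {p : ℕ × ℕ | 1 ≤ p.1 ∧ 1 ≤ p.2 ∧ α ^ p.1 = β ^ p.2}.Infinite} := by
  intro β hβ
  refine Metric.mem_closure_iff.2 fun ε hε ↦ ?_
  obtain ⟨γ, ⟨hβγ, hγ⟩, n, m, hn, hm, h⟩ :=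
    exists_mem_Ioo_pow_eq_pow hα (le_of_lt hβ) (lt_add_of_pos_right β hε)
  refine ⟨γ, infinite_setOf_pow_eq_pow hn hm h, ?_⟩
  rw [dist_comm, Real.dist_eq, abs_lt]
  constructor <;> linarith

theorem eventually_residual_infinite_abs_pow_sub_pow_lt {α : ℝ} (hα : 1 < α) {ψ : ℕ × ℕ → ℝ}
    (hψ : ∀ p, 0 < ψ p) :
    ∀ᶠ β in residual ℝ, 1 < β →
      {p : ℕ × ℕ | 1 ≤ p.1 ∧ 1 ≤ p.2 ∧ |α ^ p.1 - β ^ p.2| < ψ p}.Infinite := by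
  let V (p : ℕ × ℕ) : Set ℝ := {β | 1 ≤ p.1 ∧ 1 ≤ p.2 ∧ |α ^ p.1 - β ^ p.2| < ψ p}
  have hV (p : ℕ × ℕ) : IsOpen (V p) :=
    isOpen_const.and (isOpen_const.and (isOpen_lt (by fun_prop) continuous_const))
  filter_upwards [eventually_residual_infinite_of_mem_closure hV] with β hβ hβ1
  refine hβ (closure_mono (fun γ hγ ↦ ?_) (Ioi_one_subset_closure_setOf_infinite_pow_eq_pow hα hβ1))
  refine Infinite.mono ?_ hγ
  rintro p ⟨hn, hm, h⟩
  exact ⟨hn, hm, by simpa [h] using hψ p⟩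

theorem stmt_3_general {α : ℝ} (hα : 1 < α) {ψ : ℕ × ℕ → ℝ} (hψ : ∀ p, 0 < ψ p) :
    ∀ᶠ β in residual ℝ, 1 < β → MultiplicativelyIndependent α β ∧
      {p : ℕ × ℕ | 1 ≤ p.1 ∧ 1 ≤ p.2 ∧ |α ^ p.1 - β ^ p.2| < ψ p}.Infinite := by
  filter_upwards [eventually_residual_irrational_logb (one_pos.trans hα) hα.ne',
    eventually_residual_infinite_abs_pow_sub_pow_lt hα hψ] with β hirr hinf hβ
  exact ⟨multiplicativelyIndependent_of_irrational_logb hirr, hinf hβ⟩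

theorem stmt_3 :
    ∃ α β : ℝ, 1 < α ∧ 1 < β ∧
      (∀ s t : ℤ, α ^ s * β ^ t = 1 → s = 0 ∧ t = 0) ∧
      {p : ℕ × ℕ | 1 ≤ p.1 ∧ 1 ≤ p.2 ∧ |α ^ p.1 - β ^ p.2| ≤ 1}.Infinite := by
  obtain ⟨β, hgen, hβ⟩ :=
    (dense_of_mem_residual (stmt_3_general one_lt_two fun _ ↦ one_pos)).exists_gt 1
  exact ⟨2, β, one_lt_two, hβ, (hgen hβ).1, (hgen hβ).2.mono fun _ h ↦ ⟨h.1, h.2.1, h.2.2.le⟩⟩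
end

section
/- Define a : ℕ → ℕ by a(0) = 1 and a(i+1) = 10^{a(i)}, let c = ∑_{i=0}^∞ 10^{-a(i)} (a real number), and let α = 2^c. Then the set {(n, m) ∈ ℕ × ℕ : n ≥ 1, m ≥ 1, m < n, |α^n − 2^m| ≤ 4 · (log 2) · n · 2^m / 10^n} is infinite. -/
/-!
Let `c = ∑ b⁻¹ ^ a i` with `b ^ a i ≤ a (i + 1)`. Multiplying `c` by `n = b ^ a k` makes its first
`k + 1` terms an integer `m`, while the remaining terms contribute at most
`2 n b⁻¹ ^ a (k + 1) ≤ 2 n b⁻¹ ^ n`. As `β ^ (c n) = β ^ m * exp (log β * (c n - m))` and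
`|exp x - 1| ≤ 2 |x|` for `|x| ≤ 1`, the power `(β ^ c) ^ n` is correspondingly close to `β ^ m`.
-/

open Filter Topology

section StrictMonoExponents

variable {r : ℝ} {a : ℕ → ℕ}

lemma summable_pow_of_strictMono (hr₀ : 0 ≤ r) (hr₁ : r < 1) (ha : StrictMono a) :
    Summable fun i ↦ r ^ a i :=
  (summable_geometric_of_lt_one hr₀ hr₁).comp_injective ha.injective

lemma tsum_pow_le_of_strictMono (hr₀ : 0 ≤ r) (hr₁ : r < 1) (ha : StrictMono a) :
    ∑' i, r ^ a i ≤ r ^ a 0 * (1 - r)⁻¹ := by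
  have term_le (i : ℕ) : r ^ a i ≤ r ^ a 0 * r ^ i := by
    rw [← pow_add, add_comm]
    exact pow_le_pow_of_le_one hr₀ hr₁.le (ha.add_le_nat i 0)
  calc ∑' i, r ^ a i
      ≤ ∑' i, r ^ a 0 * r ^ i := (summable_pow_of_strictMono hr₀ hr₁ ha).tsum_le_tsum term_le
        ((summable_geometric_of_lt_one hr₀ hr₁).mul_left _)
    _ = r ^ a 0 * (1 - r)⁻¹ := by rw [tsum_mul_left, tsum_geometric_of_lt_one hr₀ hr₁]

lemma tsum_pow_le_two_mul_of_strictMono (hr₀ : 0 ≤ r) (hr : r ≤ 1 / 2) (ha : StrictMono a) :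
    ∑' i, r ^ a i ≤ 2 * r ^ a 0 :=
  calc ∑' i, r ^ a i
      ≤ r ^ a 0 * (1 - r)⁻¹ := tsum_pow_le_of_strictMono hr₀ (by linarith) ha
    _ ≤ r ^ a 0 * 2 := by
        gcongr
        exact inv_le_of_inv_le₀ two_pos (by linarith)
    _ = 2 * r ^ a 0 := mul_comm _ _

lemma tsum_pow_pos_of_strictMono (hr₀ : 0 < r) (hr₁ : r < 1) (ha : StrictMono a) :
    0 < ∑' i, r ^ a i :=
  (summable_pow_of_strictMono hr₀.le hr₁ ha).tsum_pos (fun _ ↦ pow_nonneg hr₀.le _) 0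
    (pow_pos hr₀ _)

lemma tsum_pow_le_one_of_strictMono (hr₀ : 0 ≤ r) (hr : r ≤ 1 / 2) (ha : StrictMono a)
    (ha0 : 1 ≤ a 0) : ∑' i, r ^ a i ≤ 1 := by
  have first_le : r ^ a 0 ≤ r := pow_le_of_le_one hr₀ (by linarith) (by lia)
  linarith [tsum_pow_le_two_mul_of_strictMono hr₀ hr ha]

end StrictMonoExponents

section Truncation

variable {b : ℕ} {a : ℕ → ℕ}

lemma inv_natCast_le_one_half (hb : 2 ≤ b) : (b : ℝ)⁻¹ ≤ 1 / 2 := by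
  simpa using inv_anti₀ two_pos (by exact_mod_cast hb : (2 : ℝ) ≤ b)

/-- The numerator over `b ^ a k` of the partial sum `∑ i ≤ k, b⁻¹ ^ a i`, for monotone `a` (so
that the subtraction in the exponent does not truncate). -/
def truncationNumerator (b : ℕ) (a : ℕ → ℕ) (k : ℕ) : ℕ :=
  ∑ i ∈ Finset.range (k + 1), b ^ (a k - a i)

lemma one_le_truncationNumerator (b : ℕ) (a : ℕ → ℕ) (k : ℕ) :
    1 ≤ truncationNumerator b a k := by
  simp [truncationNumerator, Finset.sum_range_succ]

lemma cast_truncationNumerator (hb : b ≠ 0) (ha : Monotone a) (k : ℕ) :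
    (truncationNumerator b a k : ℝ) =
      (b : ℝ) ^ a k * ∑ i ∈ Finset.range (k + 1), (b : ℝ)⁻¹ ^ a i := by
  rw [truncationNumerator, Nat.cast_sum, Finset.mul_sum]
  refine Finset.sum_congr rfl fun i hi ↦ ?_
  have hik : a i ≤ a k := ha (Finset.mem_range_succ_iff.mp hi)
  rw [Nat.cast_pow, pow_sub₀ _ (Nat.cast_ne_zero.mpr hb) hik, inv_pow]

lemma pow_mul_tsum_sub_truncationNumerator (hb : 2 ≤ b) (ha : StrictMono a) (k : ℕ) :
    (b : ℝ) ^ a k * ∑' i, (b : ℝ)⁻¹ ^ a i - truncationNumerator b a k =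
      (b : ℝ) ^ a k * ∑' i, (b : ℝ)⁻¹ ^ a (i + (k + 1)) := by
  have hb₁ : (b : ℝ)⁻¹ < 1 := inv_lt_one_of_one_lt₀ (by exact_mod_cast hb)
  rw [cast_truncationNumerator (by lia) ha.monotone,
    ← (summable_pow_of_strictMono (by positivity) hb₁ ha).sum_add_tsum_nat_add (k + 1)]
  ring

lemma pow_mul_tsum_sub_truncationNumerator_mem_Ioc (hb : 2 ≤ b) (ha : StrictMono a) (k : ℕ) :
    (b : ℝ) ^ a k * ∑' i, (b : ℝ)⁻¹ ^ a i - truncationNumerator b a k ∈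
      Set.Ioc 0 (2 * (b : ℝ) ^ a k * (b : ℝ)⁻¹ ^ a (k + 1)) := by
  have hr₀ : 0 < (b : ℝ)⁻¹ := by positivity
  have hr : (b : ℝ)⁻¹ ≤ 1 / 2 := inv_natCast_le_one_half hb
  have shift_strictMono : StrictMono fun i ↦ a (i + (k + 1)) := ha.comp (strictMono_id.add_const _)
  rw [pow_mul_tsum_sub_truncationNumerator hb ha]
  refine ⟨mul_pos (by positivity)
    (tsum_pow_pos_of_strictMono hr₀ (by linarith) shift_strictMono), ?_⟩
  calc (b : ℝ) ^ a k * ∑' i, (b : ℝ)⁻¹ ^ a (i + (k + 1))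
      ≤ (b : ℝ) ^ a k * (2 * (b : ℝ)⁻¹ ^ a (0 + (k + 1))) := by
        gcongr
        exact tsum_pow_le_two_mul_of_strictMono hr₀.le hr shift_strictMono
    _ = 2 * (b : ℝ) ^ a k * (b : ℝ)⁻¹ ^ a (k + 1) := by rw [zero_add]; ring

end Truncation

section TowerGrowth

variable {b : ℕ} {a : ℕ → ℕ}

lemma strictMono_of_pow_le_succ (hb : 2 ≤ b) (ha : ∀ i, b ^ a i ≤ a (i + 1)) : StrictMono a :=
  strictMono_nat_of_lt_succ fun i ↦ (Nat.lt_pow_self hb).trans_le (ha i)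

lemma frequently_exists_abs_mul_tsum_sub_le (hb : 2 ≤ b) (ha0 : 1 ≤ a 0)
    (ha : ∀ i, b ^ a i ≤ a (i + 1)) :
    ∃ᶠ n : ℕ in atTop, ∃ m : ℕ, 1 ≤ m ∧ m < n ∧
      |n * ∑' i, (b : ℝ)⁻¹ ^ a i - m| ≤ 2 * (n * (b : ℝ)⁻¹ ^ n) := by
  have a_strictMono : StrictMono a := strictMono_of_pow_le_succ hb ha
  have tendsto_denominator : Tendsto (fun k ↦ b ^ a k) atTop atTop :=
    ((pow_right_strictMono₀ hb).comp a_strictMono).tendsto_atTop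
  have hr : (b : ℝ)⁻¹ ≤ 1 / 2 := inv_natCast_le_one_half hb
  refine tendsto_denominator.frequently (Frequently.of_forall fun k ↦ ?_)
  obtain ⟨error_pos, error_le⟩ := pow_mul_tsum_sub_truncationNumerator_mem_Ioc hb a_strictMono k
  refine ⟨truncationNumerator b a k, one_le_truncationNumerator b a k, ?_, ?_⟩
  · have sum_le_one : ∑' i, (b : ℝ)⁻¹ ^ a i ≤ 1 :=
      tsum_pow_le_one_of_strictMono (by positivity) hr a_strictMono ha0
    have : (truncationNumerator b a k : ℝ) < (b : ℝ) ^ a k :=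
      (sub_pos.mp error_pos).trans_le (mul_le_of_le_one_right (by positivity) sum_le_one)
    exact_mod_cast this
  · rw [Nat.cast_pow, abs_of_pos error_pos, ← mul_assoc]
    refine error_le.trans (mul_le_mul_of_nonneg_left ?_ (by positivity))
    exact pow_le_pow_of_le_one (by positivity) (by linarith) (ha k)

end TowerGrowth

lemma abs_rpow_sub_rpow_le {β x y : ℝ} (hβ : 0 < β) (h : |Real.log β * (x - y)| ≤ 1) :
    |β ^ x - β ^ y| ≤ 2 * |Real.log β| * |x - y| * β ^ y := by
  have factor : β ^ x - β ^ y = β ^ y * (Real.exp (Real.log β * (x - y)) - 1) := by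
    rw [← Real.rpow_def_of_pos hβ, mul_sub_one, ← Real.rpow_add hβ, add_sub_cancel]
  calc |β ^ x - β ^ y|
      = β ^ y * |Real.exp (Real.log β * (x - y)) - 1| := by
        rw [factor, abs_mul, abs_of_pos (Real.rpow_pos_of_pos hβ y)]
    _ ≤ β ^ y * (2 * |Real.log β * (x - y)|) := by
        gcongr
        exact Real.abs_exp_sub_one_le h
    _ = 2 * |Real.log β| * |x - y| * β ^ y := by rw [abs_mul]; ring

lemma abs_rpow_pow_sub_pow_le {β c ε : ℝ} {n m : ℕ} (hβ : 0 < β) (h : |n * c - m| ≤ ε)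
    (hε : |Real.log β| * ε ≤ 1) :
    |(β ^ c) ^ n - β ^ m| ≤ 2 * |Real.log β| * ε * β ^ m := by
  have log_mul_le : |Real.log β * (n * c - m)| ≤ 1 := by
    rw [abs_mul]
    exact (mul_le_mul_of_nonneg_left h (abs_nonneg _)).trans hε
  calc |(β ^ c) ^ n - β ^ m|
      = |β ^ (n * c) - β ^ (m : ℝ)| := by
        rw [mul_comm, Real.rpow_mul_natCast hβ.le, Real.rpow_natCast]
    _ ≤ 2 * |Real.log β| * |n * c - m| * β ^ (m : ℝ) := abs_rpow_sub_rpow_le hβ log_mul_le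
    _ ≤ 2 * |Real.log β| * ε * β ^ m := by
        rw [Real.rpow_natCast]
        gcongr

lemma eventually_mul_self_mul_pow_le_one (C : ℝ) {r : ℝ} (hr₀ : 0 ≤ r) (hr₁ : r < 1) :
    ∀ᶠ n : ℕ in atTop, C * (n * r ^ n) ≤ 1 := by
  have tendsto_zero : Tendsto (fun n : ℕ ↦ C * (n * r ^ n)) atTop (𝓝 0) := by
    simpa using (tendsto_self_mul_const_pow_of_lt_one hr₀ hr₁).const_mul C
  exact tendsto_zero.eventually_le_const one_pos

theorem stmt_4_general {b : ℕ} (hb : 2 ≤ b) {a : ℕ → ℕ} (ha0 : 1 ≤ a 0)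
    (ha : ∀ i, b ^ a i ≤ a (i + 1)) {c : ℝ} (hc : c = ∑' i, (b : ℝ)⁻¹ ^ a i)
    {β : ℝ} (hβ : 0 < β) :
    {p : ℕ × ℕ | 1 ≤ p.1 ∧ 1 ≤ p.2 ∧ p.2 < p.1 ∧
      |(β ^ c) ^ p.1 - β ^ p.2| ≤
        4 * |Real.log β| * p.1 * β ^ p.2 / (b : ℝ) ^ p.1}.Infinite := by
  have hb₁ : (b : ℝ)⁻¹ < 1 := inv_lt_one_of_one_lt₀ (by exact_mod_cast hb)
  have approximations := (frequently_exists_abs_mul_tsum_sub_le hb ha0 ha).and_eventually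
    (eventually_mul_self_mul_pow_le_one (|Real.log β| * 2) (by positivity) hb₁)
  refine .of_image Prod.fst ((Nat.frequently_atTop_iff_infinite.mp approximations).mono ?_)
  rintro n ⟨⟨m, one_le_m, m_lt_n, error_le⟩, error_small⟩
  refine ⟨(n, m), ⟨one_le_m.trans m_lt_n.le, one_le_m, m_lt_n, ?_⟩, rfl⟩
  calc |(β ^ c) ^ n - β ^ m|
      ≤ 2 * |Real.log β| * (2 * (n * (b : ℝ)⁻¹ ^ n)) * β ^ m :=
        abs_rpow_pow_sub_pow_le hβ (hc ▸ error_le) (by rwa [← mul_assoc])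
    _ = 4 * |Real.log β| * n * β ^ m / (b : ℝ) ^ n := by rw [inv_pow]; ring

theorem stmt_4 (a : ℕ → ℕ) (ha0 : a 0 = 1) (ha : ∀ i, a (i + 1) = 10 ^ a i)
    (c : ℝ) (hc : c = ∑' i : ℕ, (10 : ℝ) ^ (-(a i : ℤ)))
    (α : ℝ) (hα : α = (2 : ℝ) ^ c) :
    {p : ℕ × ℕ | 1 ≤ p.1 ∧ 1 ≤ p.2 ∧ p.2 < p.1 ∧
      |α ^ p.1 - (2 : ℝ) ^ p.2| ≤
        4 * Real.log 2 * p.1 * 2 ^ p.2 / 10 ^ p.1}.Infinite := by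
  simpa [hα, abs_of_pos (Real.log_pos one_lt_two)] using
    stmt_4_general (b := 10) (by norm_num) ha0.ge (fun i ↦ (ha i).ge) (by simpa using hc) two_pos
end

section
/- Let Γ ⊆ ℝ be a Lebesgue null set. Then the set A = {(x, y) ∈ ℝ × ℝ : x > 1, y > 1, and log x / log y ∈ Γ} is a null set in ℝ² with respect to the 2-dimensional Lebesgue measure. -/
open MeasureTheory

/-! For fixed `y > 0` with `y ≠ 1`, the horizontal slice at height `y` lies in the image of `Γ`
under the smooth map `t ↦ y ^ t`, hence is null, and Fubini's theorem concludes. Since `Γ` need not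
be measurable, the argument is phrased with quasi-measure-preserving maps, under which preimages of
arbitrary null sets are null. -/

open Set Measure

theorem quasiMeasurePreserving_restrict_of_leftInvOn {E : Type*} [NormedAddCommGroup E]
    [NormedSpace ℝ E] [FiniteDimensional ℝ E] [MeasurableSpace E] [BorelSpace E] {μ : Measure E}
    [μ.IsAddHaarMeasure] {f g : E → E} {s : Set E} (hf : Measurable f) (hgf : LeftInvOn g f s)
    (hg : DifferentiableOn ℝ g (f '' s)) : QuasiMeasurePreserving f (μ.restrict s) μ := by
  refine ⟨hf, AbsolutelyContinuous.mk fun t ht hμt ↦ ?_⟩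
  rw [map_apply hf ht, restrict_apply (hf ht)]
  have hsub : f ⁻¹' t ∩ s ⊆ g '' (t ∩ f '' s) := fun x ⟨hxt, hxs⟩ ↦
    ⟨f x, ⟨hxt, mem_image_of_mem f hxs⟩, hgf hxs⟩
  exact measure_mono_null hsub <| addHaar_image_eq_zero_of_differentiableOn_of_addHaar_eq_zero μ
    (hg.mono inter_subset_right) (measure_mono_null inter_subset_left hμt)

theorem quasiMeasurePreserving_logb {b : ℝ} (hb : 0 < b) (hb₁ : b ≠ 1) :
    QuasiMeasurePreserving (Real.logb b) (volume.restrict (Ioi 0)) volume := by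
  have hdiff : Differentiable ℝ fun t : ℝ ↦ b ^ t := fun t ↦
    (Real.hasStrictDerivAt_const_rpow hb t).hasDerivAt.differentiableAt
  exact quasiMeasurePreserving_restrict_of_leftInvOn (Real.measurable_log.div_const _)
    (fun _ hx ↦ Real.rpow_logb hb hb₁ hx) hdiff.differentiableOn

theorem quasiMeasurePreserving_logb_snd_fst :
    QuasiMeasurePreserving (fun p : ℝ × ℝ ↦ Real.logb p.2 p.1)
      (volume.restrict (Ioi 0 ×ˢ Ioi 0)) volume := by
  have hmeas : Measurable fun p : ℝ × ℝ ↦ Real.logb p.2 p.1 :=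
    (Real.measurable_log.comp measurable_fst).div (Real.measurable_log.comp measurable_snd)
  rw [volume_eq_prod, ← prod_restrict]
  refine QuasiMeasurePreserving.prod_of_left hmeas ?_
  filter_upwards [ae_restrict_mem measurableSet_Ioi, ae_ne _ (1 : ℝ)] with y hy hy₁
  exact quasiMeasurePreserving_logb hy hy₁

theorem stmt_5_general (Γ : Set ℝ) (hΓ : volume Γ = 0) :
    volume {p : ℝ × ℝ | 0 < p.1 ∧ 0 < p.2 ∧ Real.log p.1 / Real.log p.2 ∈ Γ} = 0 := by
  have hnull := quasiMeasurePreserving_logb_snd_fst.preimage_null hΓ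
  rw [restrict_apply' (measurableSet_Ioi.prod measurableSet_Ioi)] at hnull
  refine measure_mono_null ?_ hnull
  rintro p ⟨hx, hy, hΓp⟩
  exact ⟨hΓp, hx, hy⟩

theorem stmt_5 (Γ : Set ℝ) (hΓ : volume Γ = 0) :
    volume {p : ℝ × ℝ | 1 < p.1 ∧ 1 < p.2 ∧ Real.log p.1 / Real.log p.2 ∈ Γ} = 0 := by
  refine measure_mono_null ?_ (stmt_5_general Γ hΓ)
  exact fun p ⟨hx, hy, hΓp⟩ ↦ ⟨one_pos.trans hx, one_pos.trans hy, hΓp⟩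
end

section
/- Let k, c, d be positive real numbers. Suppose n ∈ ℕ satisfies c · log n ≥ 2 and (n : ℝ) ≥ k² · c² · (d+2)² · e^{d/c} · (log n)². Suppose further that z is a real number with z ≥ 2/k and (n : ℝ) ≤ k·z + c·log n + d. Then (n : ℝ) ≤ k·z + 2·c·log z. -/
/-!
Put `b = c log n`. Taking logarithms, the claim `b + d ≤ 2 c log z` says exactly that
`n e^{d/c} ≤ z²`. Since `k z ≥ 2` and `b ≥ 2`, the sum `k z + b + d` is at most the product
`k z · b (d/4 + 1)`, so `n ≤ y z` with `y = k b (d/4 + 1)`. The lower bound on `n` gives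
`y² e^{d/c} ≤ n`, hence `n · n e^{d/c} ≤ y² z² e^{d/c} ≤ n z²`.
-/

theorem add_add_le_mul_mul_div_four_add_one {K : Type*} [Field K] [LinearOrder K]
    [IsStrictOrderedRing K] {a b d : K} (ha : 2 ≤ a) (hb : 2 ≤ b) (hd : 0 ≤ d) :
    a + b + d ≤ a * b * (d / 4 + 1) := by
  have four_le_mul : 4 ≤ a * b := by
    calc (4 : K) = 2 * 2 := by norm_num
      _ ≤ a * b := by gcongr
  calc a + b + d ≤ a * b + 4 * (d / 4) := by linarith [add_le_mul ha hb]
    _ ≤ a * b + a * b * (d / 4) := by gcongr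
    _ = a * b * (d / 4 + 1) := by ring

theorem mul_le_sq_of_le_mul_of_sq_mul_le {R : Type*} [CommRing R] [LinearOrder R]
    [IsStrictOrderedRing R] {x y z e : R} (hx : 0 < x) (he : 0 ≤ e) (hxyz : x ≤ y * z)
    (hyx : y ^ 2 * e ≤ x) : x * e ≤ z ^ 2 := by
  refine le_of_mul_le_mul_left ?_ hx
  calc x * (x * e) = x ^ 2 * e := by ring
    _ ≤ (y * z) ^ 2 * e := by gcongr
    _ = y ^ 2 * e * z ^ 2 := by ring
    _ ≤ x * z ^ 2 := by gcongr

theorem mul_log_add_le_two_mul_mul_log_iff {c d x z : ℝ} (hc : 0 < c) (hx : 0 < x) (hz : z ≠ 0) :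
    c * Real.log x + d ≤ 2 * c * Real.log z ↔ x * Real.exp (d / c) ≤ z ^ 2 := by
  have log_mul_exp : Real.log (x * Real.exp (d / c)) = Real.log x + d / c := by
    rw [Real.log_mul hx.ne' (Real.exp_ne_zero _), Real.log_exp]
  have factor_left : c * Real.log x + d = c * (Real.log x + d / c) := by field_simp
  have factor_right : 2 * c * Real.log z = c * Real.log (z ^ 2) := by
    rw [Real.log_pow]; push_cast; ring
  rw [factor_left, factor_right, mul_le_mul_iff_right₀ hc, ← log_mul_exp,
    Real.log_le_log_iff (by positivity) (by positivity)]

theorem stmt_7_general {k c d x z : ℝ} (hk : 0 < k) (hc : 0 < c) (hd : 0 ≤ d)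
    (hlog : 2 ≤ c * Real.log x)
    (hx : k ^ 2 * c ^ 2 * (d / 4 + 1) ^ 2 * Real.exp (d / c) * Real.log x ^ 2 ≤ x)
    (hz : 2 / k ≤ z) (hxz : x ≤ k * z + c * Real.log x + d) :
    x ≤ k * z + 2 * c * Real.log z := by
  have x_pos : 0 < x := by
    have x_ne_zero : x ≠ 0 := by rintro rfl; norm_num at hlog
    exact (le_trans (by positivity) hx).lt_of_ne' x_ne_zero
  have z_pos : 0 < z := lt_of_lt_of_le (by positivity) hz
  have two_le_mul : 2 ≤ k * z := (div_le_iff₀' hk).mp hz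
  have le_mul : x ≤ k * (c * Real.log x) * (d / 4 + 1) * z := by
    linarith [add_add_le_mul_mul_div_four_add_one two_le_mul hlog hd]
  have mul_exp_le_sq : x * Real.exp (d / c) ≤ z ^ 2 :=
    mul_le_sq_of_le_mul_of_sq_mul_le x_pos (Real.exp_nonneg _) le_mul (by linarith)
  linarith [(mul_log_add_le_two_mul_mul_log_iff hc x_pos z_pos.ne').mpr mul_exp_le_sq]

theorem stmt_7 (k c d : ℝ) (hk : 0 < k) (hc : 0 < c) (hd : 0 < d) (n : ℕ)
    (h1 : 2 ≤ c * Real.log n)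
    (h2 : k ^ 2 * c ^ 2 * (d + 2) ^ 2 * Real.exp (d / c) * (Real.log n) ^ 2 ≤ (n : ℝ))
    (z : ℝ) (hz : 2 / k ≤ z)
    (h3 : (n : ℝ) ≤ k * z + c * Real.log n + d) :
    (n : ℝ) ≤ k * z + 2 * c * Real.log z :=
  stmt_7_general hk hc hd.le h1 (h2.trans' (by gcongr <;> linarith)) hz h3
end

section
/- Let S(x) = {(n, m) ∈ ℕ × ℕ : n ≥ 1, m ≥ 1, |e^n + (√5)^n − 7^m − π^m| ≤ x}, where e, √5, 7, π are real numbers and |·| is the real absolute value. Then there exist a constant C > 0 and a real number x₀ > e such that for all real x ≥ x₀ the set S(x) is finite and its cardinality satisfies (log x)²/log 7 − C·log x ≤ #S(x) ≤ (log x)²/log 7 + C·log x·log(log x). -/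
/-! The function `(exp (w / 2) - 1) ^ 2` is a Hermite–Padé approximant to `1`, `exp (w / 2)`,
`exp w`. Solving `y' = κ y + f`, `y 0 = 0`, for the exponents `κ = 0, 1/2, 1` in turn raises the
order of vanishing at `0`, and the coefficients stay integral in the basis `wⁱ / i!` because the
differences of the exponents are inverses of integers. The approximants of equal order have a
determinant which is a nonzero monomial, so at `w = 2 n / m` one of them gives a nonzero rational
linear form in `1`, `q`, `q ^ 2` with controlled denominator. It is small unless `w` is far from
`2 log q`. Taking degrees of size `√m` shows `|n - m log q| ≥ exp (-ε m)` for every `ε > 0` and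
large `m`.

Consequently, if `u n` and `v m` agree with `exp n` and `q ^ m` up to a power saving, then
`|u n - v m|` is exponentially large in `m`. If it is at most `x`, either `n` and `m log q` are both
at most `log x + O(1)`, which leaves `(log x) ^ 2 / log q + O(log x)` pairs, or they are at bounded
distance from each other with `m = O(log x)`, which leaves `O(log x)` pairs. -/

open Polynomial Asymptotics Filter Set
open scoped Nat Topology

section BorelTransform

/-- The Borel transform `∑ aᵢ Xⁱ ↦ ∑ (aᵢ / i!) Xⁱ`. It turns `Polynomial.divX` into the derivative,
so that integer polynomials encode the real polynomials `P` all of whose derivatives at `0` are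
integers. -/
noncomputable def borelTransform (a : ℤ[X]) : ℝ[X] :=
  a.sum fun i z => monomial i ((z : ℝ) / i !)

theorem coeff_borelTransform (a : ℤ[X]) (i : ℕ) :
    (borelTransform a).coeff i = a.coeff i / i ! := by
  simp only [borelTransform, Polynomial.sum_def, finsetSum_coeff, coeff_monomial,
    Finset.sum_ite_eq', mem_support_iff, ne_eq, ite_not, ite_eq_right_iff]
  intro h
  simp [h]

theorem natDegree_borelTransform_le (a : ℤ[X]) : (borelTransform a).natDegree ≤ a.natDegree :=
  natDegree_le_iff_coeff_eq_zero.2 fun i hi => by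
    simp [coeff_borelTransform, coeff_eq_zero_of_natDegree_lt hi]

theorem derivative_borelTransform (a : ℤ[X]) :
    derivative (borelTransform a) = borelTransform a.divX := by
  ext i
  rw [coeff_derivative, coeff_borelTransform, coeff_borelTransform, coeff_divX, Nat.factorial_succ]
  push_cast
  field_simp

theorem eval_zero_borelTransform (a : ℤ[X]) : (borelTransform a).eval 0 = a.coeff 0 := by
  simp [← coeff_zero_eq_eval_zero, coeff_borelTransform]

theorem eval_borelTransform {a : ℤ[X]} {n : ℕ} (hn : a.natDegree < n) (w : ℝ) :
    (borelTransform a).eval w = ∑ i ∈ Finset.range n, a.coeff i * (w ^ i / i !) := by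
  rw [eval_eq_sum_range' ((natDegree_borelTransform_le a).trans_lt hn)]
  exact Finset.sum_congr rfl fun i _ => by rw [coeff_borelTransform]; ring

theorem borelTransform_C (z : ℤ) : borelTransform (C z) = C (z : ℝ) := by
  rw [borelTransform, sum_C_index (by simp)]
  simp

theorem exists_eval_borelTransform_mul_eq_intCast {a : ℤ[X]} {D : ℕ} (ha : a.natDegree ≤ D)
    (n : ℤ) {s : ℕ} (hs : s ≠ 0) :
    ∃ z : ℤ, (borelTransform a).eval ((n : ℝ) / s) * (s ^ D * D !) = z := by
  have monomial_term (i : ℕ) (hi : i ∈ Finset.range (D + 1)) :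
      (a.coeff i : ℝ) * (((n : ℝ) / s) ^ i / i !) * (s ^ D * D !) =
        (a.coeff i * (n ^ i * s ^ (D - i) * D.descFactorial (D - i)) : ℤ) := by
    have hiD : i ≤ D := Finset.mem_range_succ_iff.1 hi
    have hs' : (s : ℝ) ≠ 0 := mod_cast hs
    have hfact : i ! * D.descFactorial (D - i) = D ! := by
      simpa only [Nat.sub_sub_self hiD] using Nat.factorial_mul_descFactorial (Nat.sub_le D i)
    have hpow : (s : ℝ) ^ D = s ^ i * s ^ (D - i) := by rw [← pow_add, Nat.add_sub_cancel' hiD]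
    rw [← hfact, hpow, div_pow]
    push_cast
    field_simp
  refine ⟨∑ i ∈ Finset.range (D + 1),
    a.coeff i * (n ^ i * s ^ (D - i) * D.descFactorial (D - i)), ?_⟩
  rw [eval_borelTransform (Nat.lt_succ_of_le ha), Finset.sum_mul, Int.cast_sum]
  exact Finset.sum_congr rfl monomial_term

end BorelTransform

section WeightedNorm

/-- The weighted `ℓ¹` norm `∑ |aᵢ| ρⁱ` of an integer polynomial. -/
noncomputable def weightedNorm (ρ : ℝ) (a : ℤ[X]) : ℝ :=
  a.sum fun i z => |(z : ℝ)| * ρ ^ i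

variable {ρ : ℝ}

theorem weightedNorm_eq_sum_range {a : ℤ[X]} {n : ℕ} (hn : a.natDegree < n) :
    weightedNorm ρ a = ∑ i ∈ Finset.range n, |(a.coeff i : ℝ)| * ρ ^ i :=
  a.sum_over_range' (by simp) n hn

theorem weightedNorm_C (z : ℤ) : weightedNorm ρ (C z) = |(z : ℝ)| := by
  rw [weightedNorm, sum_C_index (by simp), pow_zero, mul_one]

theorem weightedNorm_nonneg (hρ : 0 ≤ ρ) (a : ℤ[X]) : 0 ≤ weightedNorm ρ a :=
  Finset.sum_nonneg fun _ _ => by positivity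

theorem weightedNorm_eq_abs_coeff_zero_add (a : ℤ[X]) :
    weightedNorm ρ a = |(a.coeff 0 : ℝ)| + ρ * weightedNorm ρ a.divX := by
  rw [weightedNorm_eq_sum_range (Nat.lt_add_one _), Finset.sum_range_succ', add_comm]
  rcases Nat.eq_zero_or_pos a.natDegree with h | h
  · simp [h, divX_eq_zero_iff.2 (eq_C_of_natDegree_eq_zero h), weightedNorm]
  · rw [weightedNorm_eq_sum_range (n := a.natDegree)
      (by rw [natDegree_divX_eq_natDegree_tsub_one]; omega), Finset.mul_sum]
    simp only [pow_zero, mul_one, coeff_divX, pow_succ]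
    congr 1
    exact Finset.sum_congr rfl fun i _ => by ring

theorem weightedNorm_sub_le (hρ : 0 ≤ ρ) (a b : ℤ[X]) :
    weightedNorm ρ (a - b) ≤ weightedNorm ρ a + weightedNorm ρ b := by
  have hn := Nat.lt_add_one (max a.natDegree b.natDegree)
  rw [weightedNorm_eq_sum_range ((natDegree_sub_le a b).trans_lt hn),
    weightedNorm_eq_sum_range ((le_max_left _ _).trans_lt hn),
    weightedNorm_eq_sum_range ((le_max_right _ _).trans_lt hn), ← Finset.sum_add_distrib]
  refine Finset.sum_le_sum fun i _ => ?_
  rw [coeff_sub, ← add_mul, Int.cast_sub]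
  gcongr
  exact abs_sub _ _

theorem weightedNorm_C_mul (u : ℤ) (a : ℤ[X]) :
    weightedNorm ρ (C u * a) = |(u : ℝ)| * weightedNorm ρ a := by
  rw [weightedNorm_eq_sum_range ((natDegree_C_mul_le u a).trans_lt (Nat.lt_add_one _)),
    weightedNorm_eq_sum_range (Nat.lt_add_one _), Finset.mul_sum]
  exact Finset.sum_congr rfl fun i _ => by rw [coeff_C_mul]; push_cast; rw [abs_mul, mul_assoc]

theorem abs_pow_div_factorial_sub_le (hρ : 1 ≤ ρ) {w l : ℝ} (hw : |w| ≤ ρ) (hl : |l| ≤ ρ) (i : ℕ) :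
    |w ^ i / (i ! : ℝ) - l ^ i / (i ! : ℝ)| ≤ |w - l| * ρ ^ i := by
  have hfact : (0 : ℝ) < i ! := by positivity
  have hpow : max |w| |l| ^ (i - 1) ≤ ρ ^ i :=
    (pow_le_pow_left₀ (by positivity) (max_le hw hl) _).trans
      (pow_le_pow_right₀ hρ (Nat.sub_le i 1))
  have hself : (i : ℝ) ≤ i ! := mod_cast Nat.self_le_factorial i
  rw [← sub_div, abs_div, abs_of_pos hfact, div_le_iff₀ hfact]
  calc |w ^ i - l ^ i| ≤ |w - l| * i * max |w| |l| ^ (i - 1) := abs_pow_sub_pow_le w l i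
    _ ≤ |w - l| * i ! * ρ ^ i := by gcongr
    _ = |w - l| * ρ ^ i * i ! := by ring

theorem abs_eval_borelTransform_sub_le (hρ : 1 ≤ ρ) {w l : ℝ} (hw : |w| ≤ ρ) (hl : |l| ≤ ρ)
    (a : ℤ[X]) :
    |(borelTransform a).eval w - (borelTransform a).eval l| ≤ weightedNorm ρ a * |w - l| := by
  have hn := Nat.lt_add_one a.natDegree
  rw [eval_borelTransform hn, eval_borelTransform hn, weightedNorm_eq_sum_range hn,
    ← Finset.sum_sub_distrib, Finset.sum_mul]
  refine (Finset.abs_sum_le_sum_abs _ _).trans (Finset.sum_le_sum fun i _ => ?_)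
  rw [← mul_sub, abs_mul, mul_assoc, mul_comm (ρ ^ i)]
  gcongr
  exact abs_pow_div_factorial_sub_le hρ hw hl i

end WeightedNorm

section LinearRecursion

theorem exists_eq_C_mul_sub_divX (u : ℤ) (a : ℤ[X]) : ∃ b : ℤ[X], b = C u * (a - b.divX) := by
  induction a using recOnHorner with
  | M0 => exact ⟨0, by simp⟩
  | MC p r _ _ ih =>
    obtain ⟨b, hb⟩ := ih
    refine ⟨b + C (u * r), ?_⟩
    rw [divX_add, divX_C, add_zero, C_mul]
    linear_combination hb
  | MX p _ ih =>
    obtain ⟨b, hb⟩ := ih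
    have hdivX : (b * X - C (u * b.coeff 0)).divX = b := by
      ext i
      rw [coeff_divX, coeff_sub, coeff_mul_X, coeff_C_succ, sub_zero]
    refine ⟨b * X - C (u * b.coeff 0), ?_⟩
    rw [hdivX, C_mul]
    linear_combination X * hb - C u * divX_mul_X_add b

theorem degree_eq_of_eq_C_mul_sub_divX {u : ℤ} (hu : u ≠ 0) {a b : ℤ[X]}
    (hb : b = C u * (a - b.divX)) : b.degree = a.degree := by
  rcases eq_or_ne b 0 with rfl | hb0
  · have : a = 0 := by simpa [hu] using hb.symm
    rw [this]
  · have hlt : (C u * b.divX).degree < b.degree := by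
      rw [degree_C_mul hu]
      exact degree_divX_lt hb0
    rw [← degree_add_eq_left_of_degree_lt hlt, ← degree_C_mul hu (p := a)]
    congr 1
    linear_combination hb

theorem weightedNorm_le_of_eq_C_mul_sub_divX {ρ : ℝ} (hρ : 0 ≤ ρ) {u : ℤ} (hu : 2 * |(u : ℝ)| ≤ ρ)
    {a b : ℤ[X]} (hb : b = C u * (a - b.divX)) : weightedNorm ρ b ≤ ρ * weightedNorm ρ a := by
  have hnorm : weightedNorm ρ b ≤ |(u : ℝ)| * (weightedNorm ρ a + weightedNorm ρ b.divX) := by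
    conv_lhs => rw [hb, weightedNorm_C_mul]
    gcongr
    exact weightedNorm_sub_le hρ _ _
  have hdivX : ρ * weightedNorm ρ b.divX ≤ weightedNorm ρ b := by
    rw [weightedNorm_eq_abs_coeff_zero_add b]
    exact le_add_of_nonneg_left (abs_nonneg _)
  have ha := weightedNorm_nonneg hρ a
  have hb' := weightedNorm_nonneg hρ b.divX
  nlinarith

end LinearRecursion

section HermitePade

variable {ι : Type*} [Fintype ι] {κ : ι → ℝ} {ρ : ℝ}

/-- The exponential sum `∑ Pⱼ(w) exp (κⱼ w)`, where `Pⱼ` is the Borel transform of `aⱼ`. -/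
noncomputable def expSum (κ : ι → ℝ) (a : ι → ℤ[X]) (w : ℝ) : ℝ :=
  ∑ j, (borelTransform (a j)).eval w * Real.exp (κ j * w)

/-- The exponential sum with coefficients `a'` solves `y' = κ c * y + expSum κ a`, `y 0 = 0`. The
condition is expressed on the coefficients. -/
structure IsTwistedPrimitive (κ : ι → ℝ) (c : ι) (a a' : ι → ℤ[X]) : Prop where
  derivative_add (j : ι) : derivative (borelTransform (a' j)) +
    C (κ j - κ c) * borelTransform (a' j) = borelTransform (a j)
  sum_coeff_zero : ∑ j, (a' j).coeff 0 = 0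

theorem IsTwistedPrimitive.hasDerivAt_expSum {c : ι} {a a' : ι → ℤ[X]}
    (h : IsTwistedPrimitive κ c a a') (w : ℝ) :
    HasDerivAt (expSum κ a') (κ c * expSum κ a' w + expSum κ a w) w := by
  have term (j : ι) : HasDerivAt
      (fun w => (borelTransform (a' j)).eval w * Real.exp (κ j * w))
      (κ c * ((borelTransform (a' j)).eval w * Real.exp (κ j * w)) +
        (borelTransform (a j)).eval w * Real.exp (κ j * w)) w := by
    refine (((borelTransform (a' j)).hasDerivAt w).fun_mul
      ((hasDerivAt_id w).const_mul (κ j)).exp).congr_deriv ?_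
    rw [← h.derivative_add j, eval_add, eval_mul, eval_C, mul_one, id_eq]
    ring
  unfold expSum
  rw [Finset.mul_sum, ← Finset.sum_add_distrib]
  exact HasDerivAt.fun_sum fun j _ => term j

theorem IsTwistedPrimitive.expSum_zero {c : ι} {a a' : ι → ℤ[X]}
    (h : IsTwistedPrimitive κ c a a') : expSum κ a' 0 = 0 := by
  simp only [expSum, eval_zero_borelTransform, mul_zero, Real.exp_zero, mul_one]
  exact_mod_cast h.sum_coeff_zero

/-- The differences of the exponents `κ` are inverses of integers, small compared to `ρ`. This is
what makes the coefficients of twisted primitives integral. -/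
structure IsAdmissible (κ : ι → ℝ) (ρ : ℝ) : Prop where
  one_le : 1 ≤ ρ
  le_one (j : ι) : κ j ≤ 1
  exists_inv_sub {i j : ι} (hij : i ≠ j) : ∃ u : ℤ, u * (κ i - κ j) = 1 ∧ 2 * |(u : ℝ)| ≤ ρ

theorem derivative_borelTransform_add_eq {u : ℤ} {δ : ℝ} (hu : u * δ = 1) {a b : ℤ[X]}
    (hb : b = C u * (a - b.divX)) :
    derivative (borelTransform b) + C δ * borelTransform b = borelTransform a := by
  ext i
  have hcoeff : b.coeff i = u * (a.coeff i - b.coeff (i + 1)) := by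
    conv_lhs => rw [hb, coeff_C_mul, coeff_sub, coeff_divX]
  rw [derivative_borelTransform, coeff_add, coeff_C_mul, coeff_borelTransform,
    coeff_borelTransform, coeff_borelTransform, coeff_divX, hcoeff]
  push_cast
  linear_combination (a.coeff i - b.coeff (i + 1) : ℝ) / i ! * hu

theorem IsAdmissible.exists_isTwistedPrimitive (hκ : IsAdmissible κ ρ) (c : ι)
    (a : ι → ℤ[X]) :
    ∃ a' : ι → ℤ[X], IsTwistedPrimitive κ c a a' ∧ (a' c).divX = a c ∧
      ∀ j ≠ c, (a' j).degree = (a j).degree ∧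
        weightedNorm ρ (a' j) ≤ ρ * weightedNorm ρ (a j) := by
  classical
  have exists_component (j : ι) : ∃ b : ℤ[X], j ≠ c →
      derivative (borelTransform b) + C (κ j - κ c) * borelTransform b = borelTransform (a j) ∧
      b.degree = (a j).degree ∧ weightedNorm ρ b ≤ ρ * weightedNorm ρ (a j) := by
    by_cases hj : j = c
    · exact ⟨0, fun h => (h hj).elim⟩
    obtain ⟨u, hu, huρ⟩ := hκ.exists_inv_sub hj
    have hu0 : u ≠ 0 := by
      rintro rfl
      simp at hu
    obtain ⟨b, hb⟩ := exists_eq_C_mul_sub_divX u (a j)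
    exact ⟨b, fun _ => ⟨derivative_borelTransform_add_eq hu hb,
      degree_eq_of_eq_C_mul_sub_divX hu0 hb,
      weightedNorm_le_of_eq_C_mul_sub_divX (zero_le_one.trans hκ.one_le) huρ hb⟩⟩
  choose b hb using exists_component
  let p : ℤ[X] := a c * X + C (-∑ j ∈ Finset.univ.erase c, (b j).coeff 0)
  have hdivX : p.divX = a c := by
    ext i
    rw [coeff_divX, coeff_add, coeff_mul_X, coeff_C_succ, add_zero]
  refine ⟨Function.update b c p, ⟨fun j => ?_, ?_⟩, ?_, fun j hj => ?_⟩
  · rcases eq_or_ne j c with rfl | hj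
    · rw [Function.update_self, sub_self, C_0, zero_mul, add_zero, derivative_borelTransform, hdivX]
    · rw [Function.update_of_ne hj]
      exact (hb j hj).1
  · rw [← Finset.add_sum_erase _ _ (Finset.mem_univ c), Function.update_self,
      Finset.sum_congr rfl fun j hj => by rw [Function.update_of_ne (Finset.ne_of_mem_erase hj)]]
    simp [p]
  · rw [Function.update_self, hdivX]
  · rw [Function.update_of_ne hj]
    exact (hb j hj).2

theorem IsTwistedPrimitive.sum_weightedNorm_le (hρ : 0 ≤ ρ) {c : ι}
    {a a' : ι → ℤ[X]} (h : IsTwistedPrimitive κ c a a') (hc : (a' c).divX = a c)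
    (hj : ∀ j ≠ c, weightedNorm ρ (a' j) ≤ ρ * weightedNorm ρ (a j)) :
    ∑ j, weightedNorm ρ (a' j) ≤ 2 * ρ * ∑ j, weightedNorm ρ (a j) := by
  classical
  have hsum : ∑ j ∈ Finset.univ.erase c, weightedNorm ρ (a' j) ≤
      ρ * ∑ j ∈ Finset.univ.erase c, weightedNorm ρ (a j) := by
    rw [Finset.mul_sum]
    exact Finset.sum_le_sum fun j hj' => hj j (Finset.ne_of_mem_erase hj')
  have hcoeff : |((a' c).coeff 0 : ℝ)| ≤ ∑ j ∈ Finset.univ.erase c, weightedNorm ρ (a' j) := by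
    have hzero := h.sum_coeff_zero
    rw [← Finset.add_sum_erase _ _ (Finset.mem_univ c)] at hzero
    rw [eq_neg_of_add_eq_zero_left hzero, Int.cast_neg, abs_neg, Int.cast_sum]
    refine (Finset.abs_sum_le_sum_abs _ _).trans (Finset.sum_le_sum fun j _ => ?_)
    rw [weightedNorm_eq_abs_coeff_zero_add]
    exact le_add_of_nonneg_right (mul_nonneg hρ (weightedNorm_nonneg hρ _))
  have hac := mul_nonneg hρ (weightedNorm_nonneg hρ (a c))
  rw [← Finset.add_sum_erase _ _ (Finset.mem_univ c), weightedNorm_eq_abs_coeff_zero_add, hc,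
    ← Finset.add_sum_erase _ (fun j => weightedNorm ρ (a j)) (Finset.mem_univ c)]
  linarith

theorem nonneg_of_mul_le_deriv {f f' : ℝ → ℝ} {κ : ℝ} (hf : ∀ w, HasDerivAt f (f' w) w)
    (hf0 : f 0 = 0) (hf' : ∀ w, 0 ≤ w → κ * f w ≤ f' w) {w : ℝ} (hw : 0 ≤ w) : 0 ≤ f w := by
  have hderiv (w : ℝ) : HasDerivAt (fun w => f w * Real.exp (-κ * w))
      ((f' w - κ * f w) * Real.exp (-κ * w)) w := by
    refine ((hf w).fun_mul ((hasDerivAt_id w).const_mul (-κ)).exp).congr_deriv ?_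
    rw [id_eq]
    ring
  have hmono : MonotoneOn (fun w => f w * Real.exp (-κ * w)) (Ici 0) := by
    refine monotoneOn_of_hasDerivWithinAt_nonneg (convex_Ici 0)
      (fun w _ => (hderiv w).continuousAt.continuousWithinAt)
      (fun w _ => (hderiv w).hasDerivWithinAt) fun w hw => ?_
    rw [interior_Ici] at hw
    exact mul_nonneg (sub_nonneg.2 (hf' w (le_of_lt hw))) (Real.exp_pos _).le
  have hle : f 0 * Real.exp (-κ * 0) ≤ f w * Real.exp (-κ * w) := hmono self_mem_Ici hw hw
  rw [hf0, zero_mul] at hle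
  exact nonneg_of_mul_nonneg_left hle (Real.exp_pos _)

/-- A Hermite–Padé approximant to the functions `exp (κⱼ w)`: coefficients of degrees `d` whose
exponential sum vanishes to order `m` at `0`. Order and smallness on `[0, ∞)` are expressed by a
single bound, and `ρ` controls the size of the coefficients. -/
structure IsHermitePade (κ : ι → ℝ) (ρ : ℝ) (d : ι → ℕ) (m : ℕ) (a : ι → ℤ[X]) : Prop where
  degree_eq (j : ι) : (a j).degree = d j
  sum_weightedNorm_le : ∑ j, weightedNorm ρ (a j) ≤ (2 * ρ) ^ m
  expSum_nonneg {w : ℝ} (hw : 0 ≤ w) : 0 ≤ expSum κ a w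
  expSum_le {w : ℝ} (hw : 0 ≤ w) : expSum κ a w ≤ Real.exp w * (w ^ m / m !)

theorem degree_eq_of_degree_divX_eq {a : ℤ[X]} {n : ℕ} (ha : a.divX.degree = n) :
    a.degree = (n + 1 : ℕ) := by
  have hne : a.divX ≠ 0 := ne_zero_of_coe_le_degree ha.ge
  have hnat := natDegree_eq_of_degree_eq_some ha
  rw [natDegree_divX_eq_natDegree_tsub_one] at hnat
  have hpos : a.natDegree ≠ 0 := fun h =>
    hne (divX_eq_zero_iff.2 (eq_C_of_natDegree_eq_zero h))
  rw [degree_eq_natDegree (by rintro rfl; simp at hpos)]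
  congr 1
  omega

theorem hasDerivAt_exp_mul_pow_div_factorial (m : ℕ) (w : ℝ) :
    HasDerivAt (fun w => Real.exp w * (w ^ (m + 1) / (m + 1)!))
      (Real.exp w * (w ^ (m + 1) / (m + 1)!) + Real.exp w * (w ^ m / m !)) w := by
  refine ((Real.hasDerivAt_exp w).fun_mul
    ((hasDerivAt_pow (m + 1) w).div_const ((m + 1)! : ℝ))).congr_deriv ?_
  rw [Nat.factorial_succ, Nat.add_sub_cancel]
  push_cast
  field_simp

theorem IsTwistedPrimitive.isHermitePade [DecidableEq ι] (hκ : IsAdmissible κ ρ) {c : ι}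
    {a a' : ι → ℤ[X]} (h : IsTwistedPrimitive κ c a a') (hc : (a' c).divX = a c)
    (hj : ∀ j ≠ c, (a' j).degree = (a j).degree ∧
      weightedNorm ρ (a' j) ≤ ρ * weightedNorm ρ (a j))
    {d : ι → ℕ} {m : ℕ} (ha : IsHermitePade κ ρ d m a) :
    IsHermitePade κ ρ (d + Pi.single c 1) (m + 1) a' where
  degree_eq j := by
    rcases eq_or_ne j c with rfl | hjc
    · rw [Pi.add_apply, Pi.single_eq_same]
      exact degree_eq_of_degree_divX_eq (hc ▸ ha.degree_eq j)
    · rw [Pi.add_apply, Pi.single_eq_of_ne hjc, add_zero, (hj j hjc).1, ha.degree_eq j]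
  sum_weightedNorm_le := by
    have hρ : 0 ≤ ρ := zero_le_one.trans hκ.one_le
    calc ∑ j, weightedNorm ρ (a' j)
        ≤ 2 * ρ * ∑ j, weightedNorm ρ (a j) := h.sum_weightedNorm_le hρ hc fun j hjc => (hj j hjc).2
      _ ≤ 2 * ρ * (2 * ρ) ^ m := by gcongr; exact ha.sum_weightedNorm_le
      _ = (2 * ρ) ^ (m + 1) := (pow_succ' _ _).symm
  expSum_nonneg := nonneg_of_mul_le_deriv h.hasDerivAt_expSum h.expSum_zero fun w hw =>
    le_add_of_nonneg_right (ha.expSum_nonneg hw)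
  expSum_le hw := by
    refine sub_nonneg.1 (nonneg_of_mul_le_deriv (κ := κ c)
      (fun w => (hasDerivAt_exp_mul_pow_div_factorial m w).sub (h.hasDerivAt_expSum w))
      (by simp [h.expSum_zero]) (fun w hw => ?_) hw)
    have hle := ha.expSum_le hw
    have hκc := mul_le_of_le_one_left
      (show 0 ≤ Real.exp w * (w ^ (m + 1) / (m + 1)!) by positivity) (hκ.le_one c)
    simp only [Pi.sub_apply]
    linarith

theorem IsHermitePade.exists_add_single [DecidableEq ι] (hκ : IsAdmissible κ ρ) {d : ι → ℕ} {m : ℕ}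
    {a : ι → ℤ[X]} (ha : IsHermitePade κ ρ d m a) (c : ι) :
    ∃ a', IsHermitePade κ ρ (d + Pi.single c 1) (m + 1) a' := by
  obtain ⟨a', h, hc, hj⟩ := hκ.exists_isTwistedPrimitive c a
  exact ⟨a', h.isHermitePade hκ hc hj ha⟩

theorem IsHermitePade.exists_add_one (hκ : IsAdmissible κ ρ) {d : ι → ℕ} {m : ℕ}
    {a : ι → ℤ[X]} (ha : IsHermitePade κ ρ d m a) :
    ∃ a', IsHermitePade κ ρ (d + 1) (m + Fintype.card ι) a' := by
  classical
  have exists_add_sum (s : Finset ι) :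
      ∃ a', IsHermitePade κ ρ (d + ∑ c ∈ s, Pi.single c 1) (m + s.card) a' := by
    induction s using Finset.induction_on with
    | empty => exact ⟨a, by simpa using ha⟩
    | insert c s hc ih =>
      obtain ⟨b, hb⟩ := ih
      rw [Finset.sum_insert hc, Finset.card_insert_of_notMem hc, add_comm (Pi.single c 1),
        ← add_assoc, ← add_assoc]
      exact hb.exists_add_single hκ c
  have hone : ∑ c : ι, Pi.single c 1 = (1 : ι → ℕ) := Finset.univ_sum_single 1
  simpa only [hone, Finset.card_univ] using exists_add_sum Finset.univ

theorem IsHermitePade.exists_add_natCast (hκ : IsAdmissible κ ρ) {d : ι → ℕ} {m : ℕ}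
    {a : ι → ℤ[X]} (ha : IsHermitePade κ ρ d m a) (k : ℕ) :
    ∃ a', IsHermitePade κ ρ (d + k) (m + Fintype.card ι * k) a' := by
  induction k with
  | zero => exact ⟨a, by simpa using ha⟩
  | succ k ih =>
    obtain ⟨b, hb⟩ := ih
    rw [Nat.cast_succ, mul_add_one, ← add_assoc, ← add_assoc]
    exact hb.exists_add_one hκ

end HermitePade

section PolynomialMatrix

variable {ι R : Type*} [Fintype ι] [DecidableEq ι] [CommRing R]

theorem natDegree_det_le_card_mul {M : Matrix ι ι R[X]} {d : ℕ}
    (hM : ∀ i j, (M i j).natDegree ≤ d) : M.det.natDegree ≤ Fintype.card ι * d := by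
  rw [Matrix.det_apply]
  refine natDegree_sum_le_of_forall_le _ _ fun σ _ => (natDegree_smul_le _ _).trans ?_
  exact (natDegree_prod_le _ _).trans (Finset.sum_le_card_nsmul _ _ _ fun i _ => hM _ _)

theorem coeff_det_card_mul {M : Matrix ι ι R[X]} {d : ℕ} (hM : ∀ i j, (M i j).natDegree ≤ d) :
    M.det.coeff (Fintype.card ι * d) = (M.map fun p => p.coeff d).det := by
  simp only [Matrix.det_apply, finsetSum_coeff, coeff_smul, Matrix.map_apply]
  refine Finset.sum_congr rfl fun σ _ => ?_
  rw [← Finset.card_univ, coeff_prod_of_natDegree_le _ _ _ fun i _ => hM _ _]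

end PolynomialMatrix

section OrderAtZero

theorem X_pow_dvd_of_isBigO {p : ℝ[X]} {m : ℕ}
    (hp : (fun w => p.eval w) =O[𝓝[>] 0] fun w => w ^ m) : X ^ m ∣ p := by
  induction m generalizing p with
  | zero => exact one_dvd p
  | succ m ih =>
    have hlim : Tendsto (fun w : ℝ => w ^ (m + 1)) (𝓝[>] 0) (𝓝 0) := by
      simpa using ((continuous_pow (M := ℝ) (m + 1)).tendsto 0).mono_left nhdsWithin_le_nhds
    have hroot : p.eval 0 = 0 := tendsto_nhds_unique
      ((p.continuous.tendsto 0).mono_left nhdsWithin_le_nhds) (hp.trans_tendsto hlim)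
    obtain ⟨q, rfl⟩ : X ∣ p := X_dvd_iff.2 (by rwa [coeff_zero_eq_eval_zero])
    rw [pow_succ']
    refine mul_dvd_mul_left X (ih ?_)
    refine ((isBigO_refl (fun w : ℝ => w⁻¹) _).mul hp).congr' ?_ ?_ <;>
      filter_upwards [self_mem_nhdsWithin] with w hw
    · rw [eval_mul, eval_X, inv_mul_cancel_left₀ (ne_of_gt hw)]
    · rw [pow_succ', inv_mul_cancel_left₀ (ne_of_gt hw)]

theorem eval_eq_coeff_mul_pow {p : ℝ[X]} {N : ℕ} (hdvd : X ^ N ∣ p) (hdeg : p.natDegree ≤ N)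
    (w : ℝ) : p.eval w = p.coeff N * w ^ N := by
  obtain ⟨q, rfl⟩ := hdvd
  rcases eq_or_ne q 0 with rfl | hq
  · simp
  · rw [natDegree_X_pow_mul _ hq] at hdeg
    obtain ⟨c, rfl⟩ := natDegree_eq_zero.1 (show q.natDegree = 0 by omega)
    rw [eval_mul, eval_pow, eval_X, eval_C, coeff_X_pow_mul', if_pos le_rfl, Nat.sub_self,
      coeff_C_zero, mul_comm]

theorem isBigO_nhdsGT_one_of_continuous {f : ℝ → ℝ} (hf : Continuous f) :
    f =O[𝓝[>] 0] fun _ => (1 : ℝ) :=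
  ((hf.tendsto 0).mono_left nhdsWithin_le_nhds).isBigO_one ℝ

end OrderAtZero

section Nonvanishing

variable {ι : Type*} [Fintype ι] {κ : ι → ℝ} {ρ : ℝ}

theorem IsHermitePade.expSum_isBigO {d : ι → ℕ} {m : ℕ} {a : ι → ℤ[X]}
    (ha : IsHermitePade κ ρ d m a) : expSum κ a =O[𝓝[>] 0] fun w => w ^ m := by
  have hbound : expSum κ a =O[𝓝[>] 0] fun w => Real.exp w * (w ^ m / m !) :=
    .of_norm_eventuallyLE <| by
      filter_upwards [self_mem_nhdsWithin] with w hw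
      rw [Real.norm_of_nonneg (ha.expSum_nonneg (le_of_lt hw))]
      exact ha.expSum_le (le_of_lt hw)
  refine hbound.trans ?_
  simpa only [div_eq_inv_mul, one_mul, mul_assoc] using
    (isBigO_nhdsGT_one_of_continuous Real.continuous_exp).mul
      ((isBigO_refl (fun w : ℝ => w ^ m) _).const_mul_left (m ! : ℝ)⁻¹)

variable [DecidableEq ι]

/-- The matrix of the Borel transforms of the polynomials `A c j`. -/
noncomputable def borelMatrix (A : ι → ι → ℤ[X]) : Matrix ι ι ℝ[X] :=
  Matrix.of fun c j => borelTransform (A c j)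

theorem eval_det_borelMatrix_mul_exp (A : ι → ι → ℤ[X]) (j : ι) (w : ℝ) :
    (borelMatrix A).det.eval w * Real.exp (κ j * w) =
      ∑ c, ((borelMatrix A).adjugate j c).eval w * expSum κ (A c) w := by
  calc (borelMatrix A).det.eval w * Real.exp (κ j * w)
      = ∑ i, (((borelMatrix A).adjugate * borelMatrix A) j i).eval w * Real.exp (κ i * w) := by
        simp [Matrix.adjugate_mul, Matrix.one_apply, apply_ite (eval w)]
    _ = ∑ i, ∑ c, ((borelMatrix A).adjugate j c).eval w *
          ((borelTransform (A c i)).eval w * Real.exp (κ i * w)) := by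
        simp only [Matrix.mul_apply, eval_finsetSum, eval_mul, Finset.sum_mul, mul_assoc]
        rfl
    _ = ∑ c, ((borelMatrix A).adjugate j c).eval w * expSum κ (A c) w := by
        rw [Finset.sum_comm]
        simp only [expSum, Finset.mul_sum]

theorem X_pow_dvd_det_borelMatrix [Nonempty ι] {d : ι → ι → ℕ} {m : ℕ} {A : ι → ι → ℤ[X]}
    (hA : ∀ c, IsHermitePade κ ρ (d c) m (A c)) : X ^ m ∣ (borelMatrix A).det := by
  obtain ⟨j⟩ := ‹Nonempty ι›
  have hexp := isBigO_nhdsGT_one_of_continuous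
    (f := fun w => Real.exp (-(κ j * w))) (by fun_prop)
  have hadj : (fun w => ∑ c, ((borelMatrix A).adjugate j c).eval w * expSum κ (A c) w)
      =O[𝓝[>] 0] fun w => w ^ m := by
    refine IsBigO.fun_sum fun c _ => ?_
    simpa only [one_mul] using
      (isBigO_nhdsGT_one_of_continuous ((borelMatrix A).adjugate j c).continuous).mul
        (hA c).expSum_isBigO
  refine X_pow_dvd_of_isBigO ((hadj.mul hexp).congr (fun w => ?_) fun w => mul_one _)
  rw [← eval_det_borelMatrix_mul_exp, mul_assoc, ← Real.exp_add, add_neg_cancel, Real.exp_zero,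
    mul_one]

theorem IsHermitePade.natDegree_le_add_one {k m : ℕ} {c : ι} {a : ι → ℤ[X]}
    (ha : IsHermitePade κ ρ ((k : ι → ℕ) + Pi.single c 1) m a) (j : ι) :
    (a j).natDegree ≤ k + 1 := by
  have hsingle : (Pi.single c 1 : ι → ℕ) j ≤ 1 := by
    rw [Pi.single_apply]
    split_ifs <;> simp
  rw [natDegree_eq_of_degree_eq_some (ha.degree_eq j), Pi.add_apply, Pi.natCast_apply, Nat.cast_id]
  exact Nat.add_le_add_left hsingle k

theorem natDegree_borelMatrix_le {k m : ℕ} {A : ι → ι → ℤ[X]}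
    (hA : ∀ c, IsHermitePade κ ρ ((k : ι → ℕ) + Pi.single c 1) m (A c)) (c j : ι) :
    (borelMatrix A c j).natDegree ≤ k + 1 :=
  (natDegree_borelTransform_le (A c j)).trans ((hA c).natDegree_le_add_one j)

theorem coeff_det_borelMatrix_ne_zero {k m : ℕ} {A : ι → ι → ℤ[X]}
    (hA : ∀ c, IsHermitePade κ ρ ((k : ι → ℕ) + Pi.single c 1) m (A c)) :
    (borelMatrix A).det.coeff (Fintype.card ι * (k + 1)) ≠ 0 := by
  have hdiag : (borelMatrix A).map (fun p => p.coeff (k + 1)) =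
      Matrix.diagonal fun c => (borelTransform (A c c)).coeff (k + 1) := by
    ext c j
    rcases eq_or_ne c j with rfl | hcj
    · simp [borelMatrix]
    · have hlt : (A c j).degree < (k + 1 : ℕ) := by
        rw [(hA c).degree_eq j, Pi.add_apply, Pi.single_eq_of_ne hcj.symm]
        exact_mod_cast Nat.lt_succ_self k
      simp [borelMatrix, hcj, coeff_borelTransform, coeff_eq_zero_of_degree_lt hlt]
  rw [coeff_det_card_mul (natDegree_borelMatrix_le hA), hdiag, Matrix.det_diagonal]
  refine Finset.prod_ne_zero_iff.2 fun c _ => ?_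
  have hdeg : (A c c).degree = (k + 1 : ℕ) := by simpa using (hA c).degree_eq c
  rw [coeff_borelTransform]
  exact div_ne_zero (Int.cast_ne_zero.2 (coeff_ne_zero_of_eq_degree hdeg)) (by positivity)

theorem eval_det_borelMatrix_ne_zero [Nonempty ι] {k : ℕ} {A : ι → ι → ℤ[X]}
    (hA : ∀ c, IsHermitePade κ ρ ((k : ι → ℕ) + Pi.single c 1) (Fintype.card ι * (k + 1)) (A c))
    {w : ℝ} (hw : w ≠ 0) : (borelMatrix A).det.eval w ≠ 0 := by
  rw [eval_eq_coeff_mul_pow (X_pow_dvd_det_borelMatrix hA)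
    (natDegree_det_le_card_mul (natDegree_borelMatrix_le hA))]
  exact mul_ne_zero (coeff_det_borelMatrix_ne_zero hA) (pow_ne_zero _ hw)

theorem exists_sum_eval_borelTransform_mul_ne_zero {A : ι → ι → ℤ[X]} {w : ℝ}
    (hA : (borelMatrix A).det.eval w ≠ 0) {x : ι → ℝ} (hx : x ≠ 0) :
    ∃ c, ∑ j, (borelTransform (A c j)).eval w * x j ≠ 0 := by
  by_contra! h
  refine hA ?_
  rw [← coe_evalRingHom, RingHom.map_det]
  exact Matrix.exists_mulVec_eq_zero_iff.1 ⟨x, hx, funext h⟩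

end Nonvanishing

section IntegerValues

variable {ι : Type*} [Fintype ι] {κ : ι → ℝ} {ρ : ℝ}

theorem IsHermitePade.abs_sum_eval_mul_exp_le (hκ : IsAdmissible κ ρ) {d : ι → ℕ} {m : ℕ}
    {a : ι → ℤ[X]} (ha : IsHermitePade κ ρ d m a) {w l : ℝ} (hw : |w| ≤ ρ) (hl : 0 ≤ l)
    (hlρ : l ≤ ρ) :
    |∑ j, (borelTransform (a j)).eval w * Real.exp (κ j * l)| ≤
      Real.exp l * ((2 * ρ) ^ m * |w - l| + l ^ m / m !) := by
  have term (j : ι) : |((borelTransform (a j)).eval w - (borelTransform (a j)).eval l) *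
      Real.exp (κ j * l)| ≤ weightedNorm ρ (a j) * (|w - l| * Real.exp l) := by
    rw [abs_mul, Real.abs_exp, ← mul_assoc]
    gcongr
    · exact mul_nonneg (weightedNorm_nonneg (zero_le_one.trans hκ.one_le) _) (abs_nonneg _)
    · exact abs_eval_borelTransform_sub_le hκ.one_le hw (by rwa [abs_of_nonneg hl]) (a j)
    · exact mul_le_of_le_one_left hl (hκ.le_one j)
  calc |∑ j, (borelTransform (a j)).eval w * Real.exp (κ j * l)|
      = |∑ j, ((borelTransform (a j)).eval w - (borelTransform (a j)).eval l) *
          Real.exp (κ j * l) + expSum κ a l| := by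
        rw [expSum, ← Finset.sum_add_distrib]
        simp only [sub_mul, sub_add_cancel]
    _ ≤ ∑ j, weightedNorm ρ (a j) * (|w - l| * Real.exp l) + Real.exp l * (l ^ m / m !) := by
        refine (abs_add_le _ _).trans (add_le_add ?_ ?_)
        · exact (Finset.abs_sum_le_sum_abs _ _).trans (Finset.sum_le_sum fun j _ => term j)
        · rw [abs_of_nonneg (ha.expSum_nonneg hl)]
          exact ha.expSum_le hl
    _ ≤ (2 * ρ) ^ m * (|w - l| * Real.exp l) + Real.exp l * (l ^ m / m !) := by
        rw [← Finset.sum_mul]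
        gcongr
        exact ha.sum_weightedNorm_le
    _ = Real.exp l * ((2 * ρ) ^ m * |w - l| + l ^ m / m !) := by ring

theorem one_le_mul_abs_sum_eval_mul {a : ι → ℤ[X]} {D : ℕ} (ha : ∀ j, (a j).natDegree ≤ D)
    {n : ℤ} {s : ℕ} (hs : s ≠ 0) {x : ι → ℤ}
    (hne : ∑ j, (borelTransform (a j)).eval ((n : ℝ) / s) * x j ≠ 0) :
    1 ≤ s ^ D * D ! * |∑ j, (borelTransform (a j)).eval ((n : ℝ) / s) * x j| := by
  choose z hz using fun j => exists_eval_borelTransform_mul_eq_intCast (ha j) n hs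
  have hden : (0 : ℝ) < s ^ D * D ! := by positivity
  have hint : s ^ D * D ! * ∑ j, (borelTransform (a j)).eval ((n : ℝ) / s) * x j =
      ((∑ j, z j * x j : ℤ) : ℝ) := by
    push_cast
    rw [Finset.mul_sum]
    exact Finset.sum_congr rfl fun j _ => by rw [← hz j]; ring
  have hne' : ∑ j, z j * x j ≠ 0 := by
    rw [← Int.cast_ne_zero (α := ℝ), ← hint]
    exact mul_ne_zero hden.ne' hne
  calc (1 : ℝ) ≤ |((∑ j, z j * x j : ℤ) : ℝ)| := mod_cast Int.one_le_abs hne'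
    _ = s ^ D * D ! * |∑ j, (borelTransform (a j)).eval ((n : ℝ) / s) * x j| := by
      rw [← hint, abs_mul, abs_of_pos hden]

theorem IsHermitePade.one_le_of_exp_mul_eq_intCast [Nonempty ι]
    (hκ : IsAdmissible κ ρ) {r : ℕ} {a : ι → ℤ[X]} (ha : IsHermitePade κ ρ 0 r a)
    (hr : Fintype.card ι = r + 1) {l : ℝ} (hl : 0 ≤ l) (hlρ : l ≤ ρ) {x : ι → ℤ}
    (hx : ∀ j, Real.exp (κ j * l) = x j) {n : ℤ} (hn : n ≠ 0) {s : ℕ} (hs : s ≠ 0)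
    (hρ : |(n : ℝ) / s| ≤ ρ) {D : ℕ} (hD : D ≠ 0) :
    1 ≤ s ^ D * D ! * (Real.exp l * ((2 * ρ) ^ (Fintype.card ι * D) * |(n : ℝ) / s - l| +
      l ^ (Fintype.card ι * D) / (Fintype.card ι * D)!)) := by
  classical
  obtain ⟨k, rfl⟩ := Nat.exists_eq_succ_of_ne_zero hD
  have hw : (n : ℝ) / s ≠ 0 := div_ne_zero (Int.cast_ne_zero.2 hn) (Nat.cast_ne_zero.2 hs)
  have hx0 : (fun j => (x j : ℝ)) ≠ 0 := fun h =>
    (Real.exp_pos _).ne' ((hx (Classical.arbitrary ι)).trans (congr_fun h _))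
  obtain ⟨b, hb⟩ := ha.exists_add_natCast hκ k
  have horder : r + Fintype.card ι * k + 1 = Fintype.card ι * (k + 1) := by rw [hr]; ring
  choose A hA using fun c => horder ▸ zero_add (k : ι → ℕ) ▸ hb.exists_add_single hκ c
  obtain ⟨c, hc⟩ :=
    exists_sum_eval_borelTransform_mul_ne_zero (eval_det_borelMatrix_ne_zero hA hw) hx0
  refine (one_le_mul_abs_sum_eval_mul (hA c).natDegree_le_add_one hs hc).trans ?_
  gcongr
  simpa only [hx] using (hA c).abs_sum_eval_mul_exp_le hκ hρ hl hlρ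

end IntegerValues

section Logarithms

/-- The exponents of the functions `1`, `exp (w / 2)`, `exp w`. -/
noncomputable def halfExponent (j : Fin 3) : ℝ := j / 2

theorem isAdmissible_halfExponent {ρ : ℝ} (hρ : 4 ≤ ρ) : IsAdmissible halfExponent ρ where
  one_le := by linarith
  le_one j := by
    have : ((j : ℕ) : ℝ) ≤ 2 := mod_cast Nat.lt_succ_iff.1 j.isLt
    rw [halfExponent]
    linarith
  exists_inv_sub {i j} hij := by
    have huv : ∃ u : ℤ, u * ((i : ℤ) - j) = 2 ∧ |u| ≤ 2 := by
      fin_cases i <;> fin_cases j <;> first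
        | exact absurd rfl hij
        | exact ⟨2, by decide⟩
        | exact ⟨-2, by decide⟩
        | exact ⟨1, by decide⟩
        | exact ⟨-1, by decide⟩
    obtain ⟨u, hu, hu2⟩ := huv
    have hu' : (u : ℝ) * ((i : ℕ) - (j : ℕ)) = 2 := mod_cast hu
    have hu2' : |(u : ℝ)| ≤ 2 := mod_cast hu2
    refine ⟨u, ?_, by linarith⟩
    rw [halfExponent, halfExponent]
    linarith

/-- The exponential sum is `2 (exp (w / 2) - 1) ^ 2`. -/
theorem isHermitePade_halfExponent {ρ : ℝ} (hρ : 4 ≤ ρ) :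
    IsHermitePade halfExponent ρ 0 2 fun j => C (![2, -4, 2] j) := by
  have hexp (w : ℝ) : Real.exp w = Real.exp (w / 2) ^ 2 := by
    rw [← Real.exp_nat_mul, Nat.cast_ofNat, mul_div_cancel₀ _ two_ne_zero]
  have hsum (w : ℝ) : expSum halfExponent (fun j => C (![2, -4, 2] j)) w =
      2 * (Real.exp (w / 2) - 1) ^ 2 := by
    have h₀ : halfExponent 0 * w = 0 := by simp [halfExponent]
    have h₁ : halfExponent 1 * w = w / 2 := by simp [halfExponent, inv_mul_eq_div]
    have h₂ : halfExponent 2 * w = w := by simp [halfExponent]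
    simp only [expSum, Fin.sum_univ_three, borelTransform_C, eval_C, Matrix.cons_val, h₀, h₁, h₂,
      Real.exp_zero, hexp w]
    push_cast
    ring
  refine ⟨fun j => degree_C (by fin_cases j <;> decide), ?_, fun {w} hw => ?_, fun {w} hw => ?_⟩
  · calc ∑ j, weightedNorm ρ (C (![2, -4, 2] j)) = 8 := by
          simp only [weightedNorm_C, Fin.sum_univ_three, Matrix.cons_val]
          norm_num
      _ ≤ (2 * ρ) ^ 2 := by nlinarith
  · rw [hsum]
    positivity
  · rw [hsum]
    have hle : Real.exp (w / 2) - 1 ≤ Real.exp (w / 2) * (w / 2) := by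
      have hneg := Real.add_one_le_exp (-(w / 2))
      have hmul := mul_le_mul_of_nonneg_left hneg (Real.exp_pos (w / 2)).le
      rw [← Real.exp_add, add_neg_cancel, Real.exp_zero] at hmul
      linarith
    calc 2 * (Real.exp (w / 2) - 1) ^ 2 ≤ 2 * (Real.exp (w / 2) * (w / 2)) ^ 2 := by
          gcongr
          exact sub_nonneg.2 (Real.one_le_exp (by positivity))
      _ = Real.exp w * (w ^ 2 / 2 !) := by
          rw [hexp w, Nat.factorial_two]
          push_cast
          ring

theorem one_le_mul_abs_sub_log_add {q : ℕ} (hq : 1 ≤ q) {ρ : ℝ} (hρ : 4 ≤ ρ)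
    (hqρ : 2 * Real.log q ≤ ρ) {n : ℤ} (hn : n ≠ 0) {s : ℕ} (hs : s ≠ 0)
    (hnρ : |2 * (n : ℝ) / s| ≤ ρ) {D : ℕ} (hD : D ≠ 0) :
    1 ≤ s ^ D * D ! * (q ^ 2 * ((2 * ρ) ^ (3 * D) * |2 * (n : ℝ) / s - 2 * Real.log q| +
      (2 * Real.log q) ^ (3 * D) / (3 * D)!)) := by
  have hq0 : (0 : ℝ) < q := by exact_mod_cast hq
  have hexp (k : ℕ) : Real.exp (k / 2 * (2 * Real.log q)) = q ^ k := by
    rw [show (k / 2 * (2 * Real.log q) : ℝ) = k * Real.log q by ring, Real.exp_nat_mul,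
      Real.exp_log hq0]
  have hmain := (isHermitePade_halfExponent hρ).one_le_of_exp_mul_eq_intCast
    (isAdmissible_halfExponent hρ) (Fintype.card_fin 3)
    (mul_nonneg zero_le_two (Real.log_natCast_nonneg q)) hqρ (x := fun j => q ^ (j : ℕ))
    (fun j => by rw [halfExponent, hexp]; push_cast; rfl) (mul_ne_zero two_ne_zero hn) hs
    (by push_cast; exact hnρ) hD
  have hexp_two : Real.exp (2 * Real.log q) = q ^ 2 := by simpa using hexp 2
  rw [Fintype.card_fin, hexp_two] at hmain
  exact_mod_cast hmain

end Logarithms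

section LinearForms

theorem factorial_pow_three_le (D : ℕ) : D ! ^ 3 ≤ (3 * D)! := by
  have hdvd (a b : ℕ) : a ! * b ! ≤ (a + b)! :=
    Nat.le_of_dvd (Nat.factorial_pos _) (Nat.factorial_mul_factorial_dvd_factorial_add a b)
  calc D ! ^ 3 = D ! * D ! * D ! := by ring
    _ ≤ (D + D)! * D ! := by gcongr; exact hdvd D D
    _ ≤ (D + D + D)! := hdvd _ D
    _ = (3 * D)! := by congr 1; ring

theorem pow_le_exp_mul_factorial (D : ℕ) : (D : ℝ) ^ D ≤ Real.exp D * D ! := by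
  have h := Real.pow_div_factorial_le_exp (D : ℝ) D.cast_nonneg D
  rwa [div_le_iff₀ (by positivity)] at h

/-- The degrees `D = c (√m + 1)` are taken so large that `D ! / (3D)! ≤ (e / D) ^ (2D)` beats the
denominator `m ^ D`. -/
theorem pow_mul_factorial_div_factorial_le {l Q : ℝ} (hl : 0 ≤ l) (hQ : 1 ≤ Q) {c D m : ℕ}
    (hD : D ≠ 0) (hm : c ^ 2 * m ≤ D ^ 2) (hc : Q * l ^ 3 * Real.exp 2 ≤ c ^ 2) :
    (m : ℝ) ^ D * D ! * (Q * (l ^ (3 * D) / (3 * D)!)) ≤ 1 := by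
  have hpow : (m * (Q * l ^ 3 * Real.exp 2)) ^ D ≤ (Real.exp D * D !) ^ 2 :=
    calc (m * (Q * l ^ 3 * Real.exp 2)) ^ D ≤ (m * (c : ℝ) ^ 2) ^ D := by gcongr
      _ ≤ ((D : ℝ) ^ 2) ^ D := by
        gcongr
        rw [mul_comm]
        exact_mod_cast hm
      _ = ((D : ℝ) ^ D) ^ 2 := by rw [← pow_mul, ← pow_mul, mul_comm]
      _ ≤ (Real.exp D * D !) ^ 2 := by
        gcongr
        exact pow_le_exp_mul_factorial D
  have hexp : Real.exp 2 ^ D = Real.exp D ^ 2 := by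
    rw [← Real.exp_nat_mul, ← Real.exp_nat_mul, mul_comm, Nat.cast_ofNat]
  rw [mul_pow, mul_pow, hexp, mul_pow, mul_pow, ← mul_assoc, mul_comm, ← pow_mul] at hpow
  have hsq : (m : ℝ) ^ D * (Q ^ D * l ^ (3 * D)) ≤ D ! ^ 2 :=
    le_of_mul_le_mul_left hpow (by positivity)
  have hcube : (D ! : ℝ) ^ 3 ≤ (3 * D)! := mod_cast factorial_pow_three_le D
  rw [← mul_div_assoc, ← mul_div_assoc, div_le_one (by positivity)]
  calc (m : ℝ) ^ D * D ! * (Q * l ^ (3 * D))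
      ≤ (m : ℝ) ^ D * D ! * (Q ^ D * l ^ (3 * D)) := by
        gcongr
        exact le_self_pow₀ hQ hD
    _ = D ! * ((m : ℝ) ^ D * (Q ^ D * l ^ (3 * D))) := by ring
    _ ≤ D ! * D ! ^ 2 := by gcongr
    _ = (D ! : ℝ) ^ 3 := (pow_succ' _ 2).symm
    _ ≤ (3 * D)! := hcube

theorem isLittleO_mul_sqrt_mul_log (c : ℕ) :
    (fun m : ℕ => ((3 * (c * (m.sqrt + 1)) + 1 : ℕ) : ℝ) * Real.log m) =o[atTop]
      fun m : ℕ => (m : ℝ) := by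
  have hsqrt : (fun m : ℕ => ((3 * (c * (m.sqrt + 1)) + 1 : ℕ) : ℝ)) =O[atTop]
      fun m : ℕ => (m : ℝ) ^ (1 / 2 : ℝ) := by
    refine .of_bound (6 * c + 1) ?_
    filter_upwards [eventually_ge_atTop 1] with m hm
    have hone : 1 ≤ Real.sqrt m := Real.one_le_sqrt.2 (mod_cast hm)
    have hle : (m.sqrt : ℝ) ≤ Real.sqrt m := Real.nat_sqrt_le_real_sqrt
    have hc : (0 : ℝ) ≤ c := c.cast_nonneg
    rw [Real.norm_natCast, ← Real.sqrt_eq_rpow, Real.norm_of_nonneg (Real.sqrt_nonneg _)]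
    push_cast
    nlinarith
  have hlog := (isLittleO_log_rpow_atTop (show (0 : ℝ) < 1 / 2 by norm_num)).comp_tendsto
    tendsto_natCast_atTop_atTop
  refine (hsqrt.mul_isLittleO hlog).congr' .rfl ?_
  filter_upwards [eventually_gt_atTop 0] with m hm
  rw [Function.comp_apply, ← Real.rpow_add (mod_cast hm), add_halves, Real.rpow_one]

theorem eventually_pow_le_exp (c : ℕ) {ε : ℝ} (hε : 0 < ε) :
    ∀ᶠ m : ℕ in atTop, (m : ℝ) ^ (3 * (c * (m.sqrt + 1)) + 1) ≤ Real.exp (ε * m) := by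
  filter_upwards [(isLittleO_mul_sqrt_mul_log c).bound hε, eventually_gt_atTop 0] with m hm hm0
  rw [← Real.exp_log (show (0 : ℝ) < m by exact_mod_cast hm0), ← Real.exp_nat_mul,
    Real.exp_log (by exact_mod_cast hm0), Real.exp_le_exp]
  refine (le_abs_self _).trans (hm.trans_eq ?_)
  rw [Real.norm_natCast]

theorem eventually_mul_sqrt_add_one_le (c : ℕ) :
    ∀ᶠ m : ℕ in atTop, c * (m.sqrt + 1) ≤ m := by
  filter_upwards [eventually_ge_atTop ((2 * c + 1) ^ 2)] with m hm
  have hsqrt : 2 * c + 1 ≤ m.sqrt := Nat.le_sqrt'.2 hm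
  nlinarith [m.sqrt_le']

theorem one_le_pow_mul_abs_sub_mul_log {q : ℕ} (hq : 1 ≤ q) {ρ : ℝ} (hρ : 4 ≤ ρ)
    (hqρ : 2 * Real.log q ≤ ρ) {c : ℕ}
    (hc : 2 * (q : ℝ) ^ 2 * (2 * Real.log q) ^ 3 * Real.exp 2 ≤ c ^ 2) {m D : ℕ} (hD : D ≠ 0)
    (hDc : c ^ 2 * m ≤ D ^ 2) (hDm : D ≤ m) (hqm : 4 * q ^ 2 ≤ m) (hρm : (2 * ρ) ^ 3 ≤ m)
    {n : ℤ} (hn : n ≠ 0) (hnρ : |2 * (n : ℝ) / m| ≤ ρ) :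
    1 ≤ (m : ℝ) ^ (3 * D + 1) * |n - m * Real.log q| := by
  have hm : m ≠ 0 := by omega
  have hm1 : (1 : ℝ) ≤ m := by exact_mod_cast Nat.one_le_iff_ne_zero.2 hm
  have happrox := one_le_mul_abs_sub_log_add hq hρ hqρ hn hm hnρ hD
  have hremainder := pow_mul_factorial_div_factorial_le (Q := 2 * (q : ℝ) ^ 2)
    (mul_nonneg zero_le_two (Real.log_natCast_nonneg q))
    (by exact_mod_cast (by nlinarith : 1 ≤ 2 * q ^ 2)) hD hDc hc
  have hdiff : |2 * (n : ℝ) / m - 2 * Real.log q| ≤ 2 * |n - m * Real.log q| := by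
    rw [show 2 * (n : ℝ) / m - 2 * Real.log q = 2 * (n - m * Real.log q) / m by field_simp,
      abs_div, abs_mul, abs_two, Nat.abs_cast]
    exact div_le_self (by positivity) hm1
  have hfact : (D ! : ℝ) ≤ m ^ D :=
    mod_cast (Nat.factorial_le_pow D).trans (Nat.pow_le_pow_left hDm D)
  calc 1 ≤ (m : ℝ) ^ D * D ! * (2 * q ^ 2 *
        ((2 * ρ) ^ (3 * D) * |2 * (n : ℝ) / m - 2 * Real.log q|)) := by linarith
    _ ≤ (m : ℝ) ^ D * m ^ D * (2 * q ^ 2 * ((m : ℝ) ^ D * (2 * |n - m * Real.log q|))) := by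
        rw [pow_mul]
        gcongr
    _ = (m : ℝ) ^ (3 * D) * |n - m * Real.log q| * (4 * q ^ 2) := by ring
    _ ≤ (m : ℝ) ^ (3 * D) * |n - m * Real.log q| * m := by
        gcongr
        exact_mod_cast hqm
    _ = (m : ℝ) ^ (3 * D + 1) * |n - m * Real.log q| := by ring

theorem eventually_exp_neg_le_abs_sub_mul_log {q : ℕ} (hq : 2 ≤ q) {ε : ℝ} (hε : 0 < ε) :
    ∀ᶠ m : ℕ in atTop, ∀ n : ℤ, Real.exp (-(ε * m)) ≤ |n - m * Real.log q| := by
  have hlog : 0 < Real.log q := Real.log_pos (mod_cast hq)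
  obtain ⟨c, hc⟩ := exists_nat_ge
    (max 1 (2 * (q : ℝ) ^ 2 * (2 * Real.log q) ^ 3 * Real.exp 2))
  obtain ⟨hc1, hcq⟩ := max_le_iff.1 hc
  have hlarge (r : ℝ) : ∀ᶠ m : ℕ in atTop, r ≤ m :=
    tendsto_natCast_atTop_atTop.eventually_ge_atTop r
  filter_upwards [eventually_pow_le_exp c hε, eventually_mul_sqrt_add_one_le c,
    eventually_ge_atTop (4 * q ^ 2), hlarge ((2 * (2 * Real.log q + 4)) ^ 3),
    (tendsto_natCast_atTop_atTop.atTop_mul_const hlog).eventually_gt_atTop 1]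
    with m hpow hDm hqm hρm hmlog n
  rcases le_or_gt 1 |n - m * Real.log q| with hfar | hnear
  · exact (Real.exp_le_one_iff.2 (neg_nonpos.2 (by positivity))).trans hfar
  have hm : (1 : ℝ) ≤ m := by exact_mod_cast (by nlinarith : 1 ≤ m)
  obtain ⟨hlower, hupper⟩ := abs_lt.1 hnear
  have hn : (0 : ℝ) < n := by linarith
  have hnρ : |2 * (n : ℝ) / m| ≤ 2 * Real.log q + 4 := by
    rw [abs_of_pos (by positivity), div_le_iff₀ (by positivity)]
    linarith
  have hone := one_le_pow_mul_abs_sub_mul_log (by omega) (by linarith) (by linarith)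
    (hcq.trans (le_self_pow₀ hc1 two_ne_zero)) (D := c * (m.sqrt + 1))
    (mul_ne_zero (by rintro rfl; norm_num at hc1) m.sqrt.succ_ne_zero)
    (by rw [mul_pow]; gcongr; exact m.lt_succ_sqrt'.le) hDm hqm hρm
    (by rintro rfl; simp at hn) hnρ
  rw [Real.exp_neg, inv_le_iff_one_le_mul₀' (Real.exp_pos _)]
  exact hone.trans (by gcongr)

end LinearForms

section ExponentialSequences

variable {α β θ : ℝ} {u v : ℕ → ℝ}

theorem isEquivalent_exp_of_sub_isBigO (hα : 0 < α) (hθ : θ < 1)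
    (hu : (fun n => u n - Real.exp (α * n)) =O[atTop] fun n => Real.exp (θ * (α * n))) :
    u ~[atTop] fun n => Real.exp (α * n) := by
  refine hu.trans_isLittleO (Real.isLittleO_exp_comp_exp_comp.2 ?_)
  have h : Tendsto (fun n : ℕ => (n : ℝ) * ((1 - θ) * α)) atTop atTop :=
    tendsto_natCast_atTop_atTop.atTop_mul_const (mul_pos (sub_pos.2 hθ) hα)
  exact h.congr fun n => by ring

theorem exists_abs_le_mul_exp (hu : u ~[atTop] fun n => Real.exp (α * n)) :
    ∃ B, 1 ≤ B ∧ ∀ n, |u n| ≤ B * Real.exp (α * n) ∧ Real.exp (α * n) ≤ B * (|u n| + 1) := by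
  obtain ⟨B₁, -, hB₁⟩ := bound_of_isBigO_nat_atTop hu.isBigO
  have hsymm : (fun n : ℕ => Real.exp (α * n)) =O[atTop] fun n => |u n| + 1 :=
    hu.symm.isBigO.trans <| .of_norm_le fun n => (le_add_of_nonneg_right zero_le_one).trans_eq rfl
  obtain ⟨B₂, -, hB₂⟩ := bound_of_isBigO_nat_atTop hsymm
  refine ⟨max 1 (max B₁ B₂), le_max_left _ _, fun n => ⟨?_, ?_⟩⟩
  · have h := hB₁ (x := n) (Real.exp_pos _).ne'
    rw [Real.norm_eq_abs, Real.norm_of_nonneg (Real.exp_pos _).le] at h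
    exact h.trans (by gcongr; exact (le_max_left _ _).trans (le_max_right _ _))
  · have hpos : 0 < |u n| + 1 := by positivity
    have h := hB₂ (x := n) hpos.ne'
    rw [Real.norm_of_nonneg (Real.exp_pos _).le, Real.norm_of_nonneg hpos.le] at h
    exact h.trans (by gcongr; exact (le_max_right _ _).trans (le_max_right _ _))

theorem exp_max_mul_le_two_mul_abs_exp_sub {a b η : ℝ} (hη : 0 ≤ η) (hη1 : η ≤ 1)
    (hab : η ≤ |a - b|) : Real.exp (max a b) * η ≤ 2 * |Real.exp a - Real.exp b| := by
  wlog hle : b ≤ a generalizing a b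
  · rw [max_comm, abs_sub_comm]
    exact this (by rwa [abs_sub_comm]) (le_of_not_ge hle)
  have hexp_neg : Real.exp (-η) ≤ 1 - η / 2 := by
    rw [Real.exp_neg, inv_le_comm₀ (Real.exp_pos _) (by linarith)]
    refine le_trans ?_ (Real.add_one_le_exp η)
    rw [inv_le_iff_one_le_mul₀ (by linarith)]
    nlinarith
  have hb : Real.exp b ≤ Real.exp a * Real.exp (-η) := by
    rw [abs_of_nonneg (sub_nonneg.2 hle)] at hab
    rw [← Real.exp_add, Real.exp_le_exp]
    linarith
  rw [max_eq_left hle, abs_of_nonneg (sub_nonneg.2 (Real.exp_le_exp.2 hle))]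
  have := mul_le_mul_of_nonneg_left hexp_neg (Real.exp_pos a).le
  linarith

theorem exp_mul_max_le_abs_sub {a b x y A₁ A₂ η : ℝ} (hθ : 0 ≤ θ) (hA₁ : 0 ≤ A₁) (hA₂ : 0 ≤ A₂)
    (hx : |x - Real.exp a| ≤ A₁ * Real.exp (θ * a)) (hy : |y - Real.exp b| ≤ A₂ * Real.exp (θ * b))
    (hη : 0 ≤ η) (hη1 : η ≤ 1) (hab : η ≤ |a - b|)
    (hlarge : 2 * (A₁ + A₂ + 1) * Real.exp (θ * max a b) ≤ Real.exp (max a b) * η) :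
    Real.exp (θ * max a b) ≤ |x - y| := by
  have hgap := hlarge.trans (exp_max_mul_le_two_mul_abs_exp_sub hη hη1 hab)
  have hx' : |x - Real.exp a| ≤ A₁ * Real.exp (θ * max a b) :=
    hx.trans (by gcongr; exact le_max_left _ _)
  have hy' : |y - Real.exp b| ≤ A₂ * Real.exp (θ * max a b) :=
    hy.trans (by gcongr; exact le_max_right _ _)
  have htri : |Real.exp a - Real.exp b| ≤ |x - y| + |x - Real.exp a| + |y - Real.exp b| := by
    rw [show Real.exp a - Real.exp b = (x - y) - (x - Real.exp a) + (y - Real.exp b) by ring]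
    exact (abs_add_le _ _).trans (by gcongr; exact abs_sub _ _)
  linarith

theorem exists_abs_sub_exp_le
    (hu : (fun n => u n - Real.exp (α * n)) =O[atTop] fun n => Real.exp (θ * (α * n))) :
    ∃ A, 0 < A ∧ ∀ n, |u n - Real.exp (α * n)| ≤ A * Real.exp (θ * (α * n)) := by
  obtain ⟨A, hA, hAu⟩ := bound_of_isBigO_nat_atTop hu
  refine ⟨A, hA, fun n => (hAu (x := n) (Real.exp_pos _).ne').trans_eq ?_⟩
  rw [Real.norm_of_nonneg (Real.exp_pos _).le]

theorem eventually_exp_le_abs_sub (hβ : 0 < β) (hθ0 : 0 < θ) (hθ : θ < 1)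
    (hu : (fun n => u n - Real.exp (α * n)) =O[atTop] fun n => Real.exp (θ * (α * n)))
    (hv : (fun m => v m - Real.exp (β * m)) =O[atTop] fun m => Real.exp (θ * (β * m)))
    (hαβ : ∀ ε > 0, ∀ᶠ m : ℕ in atTop, ∀ n : ℕ, Real.exp (-(ε * m)) ≤ |α * n - β * m|) :
    ∀ᶠ m : ℕ in atTop, ∀ n : ℕ, Real.exp (θ * (β * m)) ≤ |u n - v m| := by
  obtain ⟨A₁, hA₁, hA₁u⟩ := exists_abs_sub_exp_le hu
  obtain ⟨A₂, hA₂, hA₂v⟩ := exists_abs_sub_exp_le hv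
  set ε := (1 - θ) * β / 2 with hε
  have hε0 : 0 < ε := div_pos (mul_pos (sub_pos.2 hθ) hβ) two_pos
  have hexp : Tendsto (fun m : ℕ => Real.exp (ε * m)) atTop atTop :=
    Real.tendsto_exp_atTop.comp (tendsto_natCast_atTop_atTop.const_mul_atTop hε0)
  filter_upwards [hαβ ε hε0, hexp.eventually_ge_atTop (2 * (A₁ + A₂ + 1))] with m hm hmA n
  set M := max (α * n) (β * m)
  have hexponent : ε * m + θ * M ≤ M + -(ε * m) := by
    have hβM : (1 - θ) * (β * m) ≤ (1 - θ) * M :=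
      mul_le_mul_of_nonneg_left (le_max_right _ _) (sub_pos.2 hθ).le
    have hεm : 2 * (ε * m) = (1 - θ) * (β * m) := by rw [hε]; ring
    linarith
  have hlarge : 2 * (A₁ + A₂ + 1) * Real.exp (θ * M) ≤ Real.exp M * Real.exp (-(ε * m)) :=
    calc 2 * (A₁ + A₂ + 1) * Real.exp (θ * M) ≤ Real.exp (ε * m) * Real.exp (θ * M) := by gcongr
      _ ≤ Real.exp M * Real.exp (-(ε * m)) := by
        rw [← Real.exp_add, ← Real.exp_add]
        exact Real.exp_le_exp.2 hexponent
  calc Real.exp (θ * (β * m)) ≤ Real.exp (θ * M) := by gcongr; exact le_max_right _ _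
    _ ≤ |u n - v m| := exp_mul_max_le_abs_sub hθ0.le hA₁.le hA₂.le (hA₁u n) (hA₂v m)
        (Real.exp_pos _).le (Real.exp_le_one_iff.2 (neg_nonpos.2 (by positivity))) (hm n) hlarge

theorem exists_mul_le_max_add (hu : u ~[atTop] fun n => Real.exp (α * n))
    (hv : v ~[atTop] fun m => Real.exp (β * m)) :
    ∃ H, 0 ≤ H ∧ ∀ L, 0 ≤ L → ∀ n m, |u n - v m| ≤ Real.exp L → α * n ≤ max (β * m) L + H := by
  obtain ⟨B₁, hB₁, hB₁u⟩ := exists_abs_le_mul_exp hu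
  obtain ⟨B₂, hB₂, hB₂v⟩ := exists_abs_le_mul_exp hv
  refine ⟨Real.log (B₁ * (B₂ + 2)), Real.log_nonneg (by nlinarith), fun L hL n m hnm => ?_⟩
  rw [← Real.exp_le_exp, Real.exp_add, Real.exp_log (by positivity)]
  have hun : |u n| ≤ |v m| + Real.exp L := by linarith [abs_sub_abs_le_abs_sub (u n) (v m)]
  have hvm : |v m| ≤ B₂ * Real.exp (max (β * m) L) := by
    refine (hB₂v m).1.trans ?_
    gcongr
    exact le_max_left _ _
  have hexpL : Real.exp L ≤ Real.exp (max (β * m) L) := Real.exp_le_exp.2 (le_max_right _ _)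
  calc Real.exp (α * n) ≤ B₁ * (|u n| + 1) := (hB₁u n).2
    _ ≤ B₁ * ((B₂ + 2) * Real.exp (max (β * m) L)) := by
      gcongr
      linarith [Real.one_le_exp hL]
    _ = Real.exp (max (β * m) L) * (B₁ * (B₂ + 2)) := by ring

end ExponentialSequences

section Counting

/-- The pairs of positive indices at which two sequences differ by at most `x`. -/
def closePairs (u v : ℕ → ℝ) (x : ℝ) : Set (ℕ × ℕ) :=
  {p | 1 ≤ p.1 ∧ 1 ≤ p.2 ∧ |u p.1 - v p.2| ≤ x}

/-- The pairs `(n, m)` of positive integers with `α n ≤ T` and `β m ≤ T`. -/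
noncomputable def indexBox (α β T : ℝ) : Finset (ℕ × ℕ) :=
  Finset.Icc 1 ⌊T / α⌋₊ ×ˢ Finset.Icc 1 ⌊T / β⌋₊

/-- A finite set containing all pairs `(n, m)` with `m ≤ K` and `|α n - β m| ≤ H`, see
`mem_indexStrip`. -/
noncomputable def indexStrip (α β H K : ℝ) : Finset (ℕ × ℕ) :=
  (Finset.range (⌊K⌋₊ + 1) ×ˢ Finset.range (⌊2 * H / α⌋₊ + 1)).image
    fun p => (⌈(β * p.1 - H) / α⌉₊ + p.2, p.1)

variable {α β : ℝ}

theorem mem_indexBox (hα : 0 < α) (hβ : 0 < β) {T : ℝ} {p : ℕ × ℕ} :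
    p ∈ indexBox α β T ↔ (1 ≤ p.1 ∧ 1 ≤ p.2) ∧ α * p.1 ≤ T ∧ β * p.2 ≤ T := by
  simp only [indexBox, Finset.mem_product, Finset.mem_Icc]
  rw [and_and_and_comm]
  refine and_congr_right fun ⟨h₁, h₂⟩ => ?_
  rw [Nat.le_floor_iff' (by omega), Nat.le_floor_iff' (by omega), le_div_iff₀' hα, le_div_iff₀' hβ]

theorem card_indexBox (T : ℝ) : (indexBox α β T).card = ⌊T / α⌋₊ * ⌊T / β⌋₊ := by
  simp [indexBox]

theorem card_indexBox_le (hα : 0 < α) (hβ : 0 < β) {T : ℝ} (hT : 0 ≤ T) :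
    ((indexBox α β T).card : ℝ) ≤ T ^ 2 / (α * β) := by
  rw [card_indexBox, Nat.cast_mul, pow_two, ← div_mul_div_comm]
  gcongr <;> exact Nat.floor_le (by positivity)

theorem le_card_indexBox (hα : 0 < α) {T : ℝ} (hT : α ≤ T) :
    (T / α - 1) * (T / β - 1) ≤ (indexBox α β T).card := by
  rw [card_indexBox, Nat.cast_mul]
  exact mul_le_mul_of_nonneg (Nat.sub_one_lt_floor _).le (Nat.sub_one_lt_floor _).le
    (sub_nonneg.2 ((one_le_div hα).2 hT)) (Nat.cast_nonneg _)

theorem mem_indexStrip (hα : 0 < α) {H K : ℝ} {p : ℕ × ℕ} (hK : p.2 ≤ K)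
    (hH : |α * p.1 - β * p.2| ≤ H) : p ∈ indexStrip α β H K := by
  obtain ⟨n, m⟩ := p
  obtain ⟨hlower, hupper⟩ := abs_le.1 hH
  have hceil : ⌈(β * m - H) / α⌉₊ ≤ n := by
    rw [Nat.ceil_le, div_le_iff₀ hα]
    linarith
  have hoffset : n - ⌈(β * m - H) / α⌉₊ ≤ ⌊2 * H / α⌋₊ := by
    refine Nat.le_floor ?_
    rw [Nat.cast_sub hceil, le_div_iff₀ hα]
    have := (div_le_iff₀ hα).1 (Nat.le_ceil ((β * m - H) / α))
    simp only at hupper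
    linarith
  exact Finset.mem_image.2 ⟨(m, n - ⌈(β * m - H) / α⌉₊), by
    simp only [Finset.mem_product, Finset.mem_range_succ_iff]
    exact ⟨Nat.le_floor hK, hoffset⟩, by simp only [Nat.add_sub_cancel' hceil]⟩

theorem card_indexStrip_le {H K : ℝ} (hK : 0 ≤ K) :
    ((indexStrip α β H K).card : ℝ) ≤ (K + 1) * (⌊2 * H / α⌋₊ + 1) := by
  have hcard : (indexStrip α β H K).card ≤ (⌊K⌋₊ + 1) * (⌊2 * H / α⌋₊ + 1) := by
    refine Finset.card_image_le.trans_eq ?_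
    rw [Finset.card_product, Finset.card_range, Finset.card_range]
  calc ((indexStrip α β H K).card : ℝ) ≤ (⌊K⌋₊ + 1) * (⌊2 * H / α⌋₊ + 1) := mod_cast hcard
    _ ≤ (K + 1) * (⌊2 * H / α⌋₊ + 1) := by gcongr; exact Nat.floor_le hK

variable {u v : ℕ → ℝ}

theorem exists_closePairs_subset {θ : ℝ} (hα : 0 < α) (hβ : 0 < β) (hθ : 0 < θ)
    (hu : u ~[atTop] fun n => Real.exp (α * n)) (hv : v ~[atTop] fun m => Real.exp (β * m))
    (huv : ∀ᶠ m : ℕ in atTop, ∀ n : ℕ, Real.exp (θ * (β * m)) ≤ |u n - v m|) :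
    ∃ H, 0 ≤ H ∧ ∀ᶠ L in atTop, closePairs u v (Real.exp L) ⊆
      (indexBox α β (L + H) ∪ indexStrip α β H (L / (θ * β)) : Finset (ℕ × ℕ)) := by
  obtain ⟨H₁, hH₁, hH₁L⟩ := exists_mul_le_max_add hu hv
  obtain ⟨H₂, -, hH₂L⟩ := exists_mul_le_max_add hv hu
  obtain ⟨m₀, hm₀⟩ := eventually_atTop.1 huv
  set H := max H₁ H₂
  refine ⟨H, hH₁.trans (le_max_left _ _), ?_⟩
  filter_upwards [eventually_ge_atTop 0, eventually_ge_atTop (m₀ * (θ * β))]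
    with L hL hLm₀ ⟨n, m⟩ ⟨hn, hm, hnm⟩
  have hαn : α * n ≤ max (β * m) L + H :=
    (hH₁L L hL n m hnm).trans (by gcongr; exact le_max_left _ _)
  have hβm : β * m ≤ max (α * n) L + H :=
    (hH₂L L hL m n (by rwa [abs_sub_comm])).trans (by gcongr; exact le_max_right _ _)
  rw [Finset.coe_union]
  have hH0 : 0 ≤ H := hH₁.trans (le_max_left _ _)
  by_cases hbox : α * n ≤ L + H ∧ β * m ≤ L + H
  · exact .inl ((mem_indexBox hα hβ).2 ⟨⟨hn, hm⟩, hbox⟩)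
  have hK : (m : ℝ) ≤ L / (θ * β) := by
    rw [le_div_iff₀ (by positivity)]
    rcases le_total m₀ m with hmm₀ | hmm₀
    · have := Real.exp_le_exp.1 ((hm₀ m hmm₀ n).trans hnm)
      linarith
    · exact le_trans (by gcongr) hLm₀
  have hLβm : L ≤ β * m := by
    by_contra! h
    rw [max_eq_right h.le] at hαn
    exact hbox ⟨hαn, by linarith⟩
  have hLαn : L ≤ α * n := by
    by_contra! h
    rw [max_eq_right h.le] at hβm
    exact hbox ⟨by linarith, hβm⟩
  rw [max_eq_left hLβm] at hαn
  rw [max_eq_left hLαn] at hβm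
  exact .inr (mem_indexStrip hα hK (abs_le.2 ⟨by linarith, by linarith⟩))

theorem exists_indexBox_subset (hα : 0 < α) (hβ : 0 < β)
    (hu : u ~[atTop] fun n => Real.exp (α * n)) (hv : v ~[atTop] fun m => Real.exp (β * m)) :
    ∃ H, 0 ≤ H ∧ ∀ L, ↑(indexBox α β (L - H)) ⊆ closePairs u v (Real.exp L) := by
  obtain ⟨B₁, hB₁, hB₁u⟩ := exists_abs_le_mul_exp hu
  obtain ⟨B₂, hB₂, hB₂v⟩ := exists_abs_le_mul_exp hv
  refine ⟨Real.log (B₁ + B₂), Real.log_nonneg (by linarith), fun L ⟨n, m⟩ hnm => ?_⟩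
  obtain ⟨⟨hn, hm⟩, hαn, hβm⟩ := (mem_indexBox hα hβ).1 hnm
  refine ⟨hn, hm, ?_⟩
  calc |u n - v m| ≤ |u n| + |v m| := abs_sub _ _
    _ ≤ B₁ * Real.exp (α * n) + B₂ * Real.exp (β * m) := add_le_add (hB₁u n).1 (hB₂v m).1
    _ ≤ B₁ * Real.exp (L - Real.log (B₁ + B₂)) + B₂ * Real.exp (L - Real.log (B₁ + B₂)) := by
      gcongr
    _ = Real.exp L := by
      rw [← add_mul, Real.exp_sub, Real.exp_log (by positivity), mul_div_cancel₀ _ (by positivity)]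

theorem exists_ncard_closePairs_le {θ : ℝ} (hα : 0 < α) (hβ : 0 < β) (hθ : 0 < θ)
    (hu : u ~[atTop] fun n => Real.exp (α * n)) (hv : v ~[atTop] fun m => Real.exp (β * m))
    (huv : ∀ᶠ m : ℕ in atTop, ∀ n : ℕ, Real.exp (θ * (β * m)) ≤ |u n - v m|) :
    ∃ C, ∀ᶠ L in atTop, (closePairs u v (Real.exp L)).Finite ∧
      ((closePairs u v (Real.exp L)).ncard : ℝ) ≤ L ^ 2 / (α * β) + C * L := by
  obtain ⟨H, hH, hsub⟩ := exists_closePairs_subset hα hβ hθ hu hv huv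
  set E : ℝ := ⌊2 * H / α⌋₊ + 1
  refine ⟨(2 * H + H ^ 2) / (α * β) + (1 / (θ * β) + 1) * E, ?_⟩
  filter_upwards [hsub, eventually_ge_atTop 1] with L hL hL1
  refine ⟨(Finset.finite_toSet _).subset hL, ?_⟩
  have hcard : (closePairs u v (Real.exp L)).ncard ≤
      (indexBox α β (L + H)).card + (indexStrip α β H (L / (θ * β))).card :=
    (ncard_le_ncard hL (Finset.finite_toSet _)).trans
      ((ncard_coe_finset _).trans_le (Finset.card_union_le _ _))
  calc ((closePairs u v (Real.exp L)).ncard : ℝ)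
      ≤ (indexBox α β (L + H)).card + (indexStrip α β H (L / (θ * β))).card := mod_cast hcard
    _ ≤ (L + H) ^ 2 / (α * β) + (L / (θ * β) + 1) * E := by
      gcongr
      · exact card_indexBox_le hα hβ (by linarith)
      · exact card_indexStrip_le (by positivity)
    _ = (L ^ 2 + 2 * H * L + H ^ 2 * 1) / (α * β) + (L / (θ * β) + 1) * E := by ring
    _ ≤ (L ^ 2 + 2 * H * L + H ^ 2 * L) / (α * β) + (L / (θ * β) + L) * E := by gcongr
    _ = L ^ 2 / (α * β) + ((2 * H + H ^ 2) / (α * β) + (1 / (θ * β) + 1) * E) * L := by ring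

theorem exists_le_ncard_closePairs (hα : 0 < α) (hβ : 0 < β)
    (hu : u ~[atTop] fun n => Real.exp (α * n)) (hv : v ~[atTop] fun m => Real.exp (β * m)) :
    ∃ C, ∀ᶠ L in atTop, (closePairs u v (Real.exp L)).Finite →
      L ^ 2 / (α * β) - C * L ≤ (closePairs u v (Real.exp L)).ncard := by
  obtain ⟨H, hH, hsub⟩ := exists_indexBox_subset hα hβ hu hv
  refine ⟨2 * H / (α * β) + 1 / α + 1 / β, ?_⟩
  filter_upwards [eventually_ge_atTop (H + α)] with L hL hfin
  have hcard : (indexBox α β (L - H)).card ≤ (closePairs u v (Real.exp L)).ncard :=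
    (ncard_coe_finset _).symm.trans_le (ncard_le_ncard (hsub L) hfin)
  have hconst : 0 ≤ H ^ 2 / (α * β) + H / α + H / β + 1 := by positivity
  calc L ^ 2 / (α * β) - (2 * H / (α * β) + 1 / α + 1 / β) * L
      ≤ L ^ 2 / (α * β) - (2 * H / (α * β) + 1 / α + 1 / β) * L +
          (H ^ 2 / (α * β) + H / α + H / β + 1) := le_add_of_nonneg_right hconst
    _ = ((L - H) / α - 1) * ((L - H) / β - 1) := by field_simp; ring
    _ ≤ (indexBox α β (L - H)).card := le_card_indexBox hα (by linarith)
    _ ≤ (closePairs u v (Real.exp L)).ncard := mod_cast hcard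

theorem exists_abs_ncard_closePairs_sub_le {θ : ℝ} (hα : 0 < α) (hβ : 0 < β) (hθ0 : 0 < θ)
    (hθ : θ < 1)
    (hu : (fun n => u n - Real.exp (α * n)) =O[atTop] fun n => Real.exp (θ * (α * n)))
    (hv : (fun m => v m - Real.exp (β * m)) =O[atTop] fun m => Real.exp (θ * (β * m)))
    (hαβ : ∀ ε > 0, ∀ᶠ m : ℕ in atTop, ∀ n : ℕ, Real.exp (-(ε * m)) ≤ |α * n - β * m|) :
    ∃ C, 0 < C ∧ ∀ᶠ x in atTop, (closePairs u v x).Finite ∧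
      |(closePairs u v x).ncard - Real.log x ^ 2 / (α * β)| ≤ C * Real.log x := by
  have hu' := isEquivalent_exp_of_sub_isBigO hα hθ hu
  have hv' := isEquivalent_exp_of_sub_isBigO hβ hθ hv
  obtain ⟨C₁, hC₁⟩ := exists_ncard_closePairs_le hα hβ hθ0 hu' hv'
    (eventually_exp_le_abs_sub hβ hθ0 hθ hu hv hαβ)
  obtain ⟨C₂, hC₂⟩ := exists_le_ncard_closePairs hα hβ hu' hv'
  refine ⟨max 1 (max C₁ C₂), by positivity, ?_⟩
  filter_upwards [Real.tendsto_log_atTop.eventually hC₁, Real.tendsto_log_atTop.eventually hC₂,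
    Real.tendsto_log_atTop.eventually_ge_atTop 0, eventually_gt_atTop 0]
    with x ⟨hfin, hupper⟩ hlower hlog hx
  rw [Real.exp_log hx] at hfin hupper hlower
  have hC₁' : C₁ * Real.log x ≤ max 1 (max C₁ C₂) * Real.log x := by
    gcongr; exact (le_max_left _ _).trans (le_max_right _ _)
  have hC₂' : C₂ * Real.log x ≤ max 1 (max C₁ C₂) * Real.log x := by
    gcongr; exact (le_max_right _ _).trans (le_max_right _ _)
  refine ⟨hfin, abs_le.2 ⟨?_, ?_⟩⟩
  · linarith [hlower hfin]
  · linarith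

end Counting

theorem pow_isBigO_exp_of_abs_le {b t : ℝ} (hb : |b| ≤ Real.exp t) :
    (fun n : ℕ => b ^ n) =O[atTop] fun n => Real.exp (t * n) :=
  .of_norm_le fun n => by
    rw [norm_pow, Real.norm_eq_abs, mul_comm, Real.exp_nat_mul]
    gcongr

theorem exists_lt_one_abs_le_exp {b d α β : ℝ} (hb : |b| < Real.exp α) (hd : |d| < Real.exp β) :
    ∃ θ, 0 < θ ∧ θ < 1 ∧ |b| ≤ Real.exp (θ * α) ∧ |d| ≤ Real.exp (θ * β) := by
  have hexp {y t : ℝ} (hy : y < Real.exp t) : ∀ᶠ θ in 𝓝[<] 1, y ≤ Real.exp (θ * t) := by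
    have hcont : Continuous fun θ => Real.exp (θ * t) := by fun_prop
    have hlim : Tendsto (fun θ => Real.exp (θ * t)) (𝓝[<] 1) (𝓝 (Real.exp (1 * t))) :=
      (hcont.tendsto 1).mono_left nhdsWithin_le_nhds
    rw [one_mul] at hlim
    exact hlim.eventually_const_le hy
  obtain ⟨θ, ⟨hθb, hθd⟩, hθ0, hθ1⟩ :=
    (((hexp hb).and (hexp hd)).and (Ioo_mem_nhdsLT zero_lt_one)).exists
  exact ⟨θ, hθ0, hθ1, hθb, hθd⟩

theorem stmt_13_general {q : ℕ} (hq : 2 ≤ q) {b d : ℝ} (hb : |b| < Real.exp 1) (hd : |d| < q) :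
    ∃ C, 0 < C ∧ ∀ᶠ x in atTop,
      {p : ℕ × ℕ | 1 ≤ p.1 ∧ 1 ≤ p.2 ∧
        |Real.exp p.1 + b ^ p.1 - q ^ p.2 - d ^ p.2| ≤ x}.Finite ∧
      |({p : ℕ × ℕ | 1 ≤ p.1 ∧ 1 ≤ p.2 ∧
        |Real.exp p.1 + b ^ p.1 - q ^ p.2 - d ^ p.2| ≤ x}.ncard : ℝ) -
          Real.log x ^ 2 / Real.log q| ≤ C * Real.log x := by
  have hq0 : (0 : ℝ) < q := by exact_mod_cast (by omega : 0 < q)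
  have hlog : 0 < Real.log q := Real.log_pos (by exact_mod_cast hq)
  have hq_pow (m : ℕ) : Real.exp (Real.log q * m) = (q : ℝ) ^ m := by
    rw [mul_comm, Real.exp_nat_mul, Real.exp_log hq0]
  obtain ⟨θ, hθ0, hθ, hbθ, hdθ⟩ := exists_lt_one_abs_le_exp hb (by rwa [Real.exp_log hq0])
  have hcount := exists_abs_ncard_closePairs_sub_le (u := fun n => Real.exp n + b ^ n)
    (v := fun m => (q : ℝ) ^ m + d ^ m) one_pos hlog hθ0 hθ
    (by simpa [mul_assoc] using pow_isBigO_exp_of_abs_le hbθ)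
    (by simpa [hq_pow, mul_assoc] using pow_isBigO_exp_of_abs_le hdθ)
    fun ε hε => (eventually_exp_neg_le_abs_sub_mul_log hq hε).mono fun m hm n => by
      simpa [mul_comm] using hm n
  simpa only [closePairs, one_mul, ← sub_sub] using hcount

theorem stmt_13 :
    ∃ C : ℝ, 0 < C ∧ ∃ x₀ : ℝ, Real.exp 1 < x₀ ∧ ∀ x : ℝ, x₀ ≤ x →
      {q : ℕ × ℕ | 1 ≤ q.1 ∧ 1 ≤ q.2 ∧
        |Real.exp q.1 + Real.sqrt 5 ^ q.1 - 7 ^ q.2 - Real.pi ^ q.2| ≤ x}.Finite ∧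
      (Real.log x) ^ 2 / Real.log 7 - C * Real.log x ≤
        ({q : ℕ × ℕ | 1 ≤ q.1 ∧ 1 ≤ q.2 ∧
          |Real.exp q.1 + Real.sqrt 5 ^ q.1 - 7 ^ q.2 - Real.pi ^ q.2| ≤ x}.ncard : ℝ) ∧
      ({q : ℕ × ℕ | 1 ≤ q.1 ∧ 1 ≤ q.2 ∧
          |Real.exp q.1 + Real.sqrt 5 ^ q.1 - 7 ^ q.2 - Real.pi ^ q.2| ≤ x}.ncard : ℝ) ≤
        (Real.log x) ^ 2 / Real.log 7 + C * Real.log x * Real.log (Real.log x) := by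
  have hsqrt : |Real.sqrt 5| < Real.exp 1 := by
    rw [abs_of_nonneg (Real.sqrt_nonneg 5), Real.sqrt_lt' (Real.exp_pos 1)]
    nlinarith [Real.exp_one_gt_d9]
  have hpi : |Real.pi| < (7 : ℕ) := by
    rw [abs_of_pos Real.pi_pos]
    push_cast
    linarith [Real.pi_lt_four]
  obtain ⟨C, hC, hcount⟩ := stmt_13_general (by norm_num) hsqrt hpi
  obtain ⟨x₀, hx₀⟩ := eventually_atTop.1 (hcount.and ((eventually_gt_atTop (Real.exp 1)).and
    ((Real.tendsto_log_atTop.comp Real.tendsto_log_atTop).eventually_ge_atTop 1)))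
  refine ⟨C, hC, x₀, (hx₀ x₀ le_rfl).2.1, fun x hx => ?_⟩
  obtain ⟨⟨hfin, hcard⟩, hex, hloglog⟩ := hx₀ x hx
  have hlog : 0 ≤ Real.log x := Real.log_nonneg ((Real.one_lt_exp_iff.2 one_pos).trans hex).le
  have hloglog_mul := le_mul_of_one_le_right (mul_nonneg hC.le hlog) hloglog
  obtain ⟨hlower, hupper⟩ := abs_le.1 hcard
  simp only [Nat.cast_ofNat] at hfin hlower hupper
  simp only [Function.comp_apply] at hloglog_mul
  exact ⟨hfin, by linarith, by linarith⟩
end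

section
/- Let α, β be real numbers with α > 1 and β > 1, let x ≥ 0 be real, and let n, m be positive integers. If |α^n − β^m| ≤ x and α^n > 2x, then |log α / log β − m/n| ≤ 2x / (log β · n · α^n). -/
/-!
The logarithm is `c⁻¹`-Lipschitz on `[c, ∞)`. Since `2 * x ≤ α ^ n`, both `α ^ n` and `β ^ m` are at
least `α ^ n / 2`, so `n * log α` and `m * log β` differ by at most `2 * x / α ^ n`; dividing by
`n * log β` gives the bound.
-/

theorem log_sub_log_le_div {a b : ℝ} (ha : 0 < a) (hb : 0 < b) :
    Real.log a - Real.log b ≤ (a - b) / b := by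
  calc Real.log a - Real.log b = Real.log (a / b) := (Real.log_div ha.ne' hb.ne').symm
    _ ≤ a / b - 1 := Real.log_le_sub_one_of_pos (div_pos ha hb)
    _ = (a - b) / b := div_sub_one hb.ne'

theorem abs_log_sub_log_le_div {a b c : ℝ} (hc : 0 < c) (hca : c ≤ a) (hcb : c ≤ b) :
    |Real.log a - Real.log b| ≤ |a - b| / c := by
  wlog hba : b ≤ a generalizing a b
  · rw [abs_sub_comm, abs_sub_comm a]
    exact this hcb hca (le_of_not_ge hba)
  have hb : 0 < b := hc.trans_le hcb
  have hlog : Real.log b ≤ Real.log a := Real.log_le_log hb hba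
  rw [abs_of_nonneg (sub_nonneg.2 hlog), abs_of_nonneg (sub_nonneg.2 hba)]
  calc Real.log a - Real.log b ≤ (a - b) / b := log_sub_log_le_div (hb.trans_le hba) hb
    _ ≤ (a - b) / c := div_le_div_of_nonneg_left (sub_nonneg.2 hba) hc hcb

theorem abs_log_sub_log_le_two_mul_div {a b x : ℝ} (ha : 0 < a) (hab : |a - b| ≤ x)
    (hxa : 2 * x ≤ a) : |Real.log a - Real.log b| ≤ 2 * x / a := by
  have hb : a / 2 ≤ b := by linarith [le_of_abs_le hab]
  calc |Real.log a - Real.log b| ≤ |a - b| / (a / 2) :=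
        abs_log_sub_log_le_div (half_pos ha) (half_le_self ha.le) hb
    _ ≤ x / (a / 2) := by gcongr
    _ = 2 * x / a := by rw [div_div_eq_mul_div, mul_comm]

theorem stmt_14_general {α β x s t : ℝ} (hα : 0 < α) (hβ : 0 < β) (hβ_ne : β ≠ 1) (hs : s ≠ 0)
    (h_close : |α ^ s - β ^ t| ≤ x) (h_large : 2 * x ≤ α ^ s) :
    |Real.log α / Real.log β - t / s| ≤ 2 * x / (|Real.log β| * |s| * α ^ s) := by
  have hlog : Real.log β ≠ 0 := Real.log_ne_zero_of_pos_of_ne_one hβ hβ_ne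
  have h_linear_form : |s * Real.log α - t * Real.log β| ≤ 2 * x / α ^ s := by
    simpa only [Real.log_rpow hα, Real.log_rpow hβ] using
      abs_log_sub_log_le_two_mul_div (Real.rpow_pos_of_pos hα s) h_close h_large
  calc |Real.log α / Real.log β - t / s|
      = |(s * Real.log α - t * Real.log β) / (Real.log β * s)| := by
        congr 1
        field_simp
    _ = |s * Real.log α - t * Real.log β| / (|Real.log β| * |s|) := by rw [abs_div, abs_mul]
    _ ≤ 2 * x / α ^ s / (|Real.log β| * |s|) := by gcongr
    _ = 2 * x / (|Real.log β| * |s| * α ^ s) := by rw [div_div, mul_comm (α ^ s)]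

theorem stmt_14 (α β x : ℝ) (hα : 1 < α) (hβ : 1 < β) (hx : 0 ≤ x)
    (n m : ℕ) (hn : 0 < n) (hm : 0 < m)
    (h1 : |α ^ n - β ^ m| ≤ x) (h2 : 2 * x < α ^ n) :
    |Real.log α / Real.log β - (m : ℝ) / (n : ℝ)| ≤
      2 * x / (Real.log β * n * α ^ n) := by
  simpa [abs_of_pos (Real.log_pos hβ)] using
    stmt_14_general (s := n) (t := m) (zero_lt_one.trans hα) (zero_lt_one.trans hβ) hβ.ne'
      (Nat.cast_ne_zero.2 hn.ne') (by simpa using h1) (by simpa using h2.le)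
end

section
/- Let n and m be positive integers and let x be a real number. Suppose that e^n ≤ 7^m, that x < max{(√5)^n, π^m}, and that |e^n + (√5)^n − 7^m − π^m| ≤ x (all quantities real). Then |e^n / 7^m − 1| ≤ 4 · (0.83)^n. -/
/-!
Write `a = e ^ n`, `b = (√5) ^ n`, `c = 7 ^ m`, `d = π ^ m`. As `max b d ≤ b + d`, the bound
`|a + b - c - d| < max b d` gives `c - a < b - d + max b d ≤ 2 * b`. Since `a ≤ c`, the relative
error `1 - a / c` is then less than `2 * (b / a) = 2 * (√5 / e) ^ n`, and `√5 / e ≈ 0.8226`.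
-/

section Ring

variable {R : Type*} [CommRing R] [LinearOrder R] [IsStrictOrderedRing R] {a b c d : R}

lemma sub_lt_two_mul_of_abs_lt_max (hb : 0 ≤ b) (hd : 0 ≤ d)
    (h : |a + b - c - d| < max b d) : c - a < 2 * b := by
  have neg_max_lt : -max b d < a + b - c - d := (abs_lt.mp h).1
  have max_le_add : max b d ≤ b + d := max_le_add_of_nonneg hb hd
  linarith

end Ring

section Field

variable {K : Type*} [Field K] [LinearOrder K] [IsStrictOrderedRing K] {a b c d : K}

lemma abs_div_sub_one_eq_of_le (hc : 0 < c) (hac : a ≤ c) : |a / c - 1| = (c - a) / c := by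
  rw [div_sub_one hc.ne', abs_div, abs_of_pos hc, abs_sub_comm, abs_of_nonneg (sub_nonneg.mpr hac)]

lemma abs_div_sub_one_lt_of_abs_lt_max (ha : 0 < a) (hb : 0 ≤ b) (hd : 0 ≤ d) (hac : a ≤ c)
    (h : |a + b - c - d| < max b d) : |a / c - 1| < 2 * (b / a) := by
  have hc : 0 < c := ha.trans_le hac
  calc |a / c - 1| = (c - a) / c := abs_div_sub_one_eq_of_le hc hac
    _ < 2 * b / c := div_lt_div_of_pos_right (sub_lt_two_mul_of_abs_lt_max hb hd h) hc
    _ ≤ 2 * b / a := by gcongr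
    _ = 2 * (b / a) := mul_div_assoc 2 b a

end Field

lemma sqrt_five_div_exp_one_lt : Real.sqrt 5 / Real.exp 1 < 0.83 := by
  have sqrt_five_lt : Real.sqrt 5 < 2.25 := by
    rw [Real.sqrt_lt' (by norm_num)]
    norm_num
  rw [div_lt_iff₀ (Real.exp_pos 1)]
  linarith [Real.exp_one_gt_d9]

lemma sqrt_five_pow_div_exp_le (n : ℕ) : Real.sqrt 5 ^ n / Real.exp n ≤ 0.83 ^ n := by
  rw [← Real.exp_one_pow, ← div_pow]
  exact pow_le_pow_left₀ (by positivity) sqrt_five_div_exp_one_lt.le n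

theorem stmt_15 (n m : ℕ) (hn : 0 < n) (hm : 0 < m) (x : ℝ)
    (h1 : Real.exp n ≤ 7 ^ m)
    (h2 : x < max (Real.sqrt 5 ^ n) (Real.pi ^ m))
    (h3 : |Real.exp n + Real.sqrt 5 ^ n - 7 ^ m - Real.pi ^ m| ≤ x) :
    |Real.exp n / 7 ^ m - 1| ≤ 4 * (0.83 : ℝ) ^ n := by
  calc |Real.exp n / 7 ^ m - 1|
      ≤ 2 * (Real.sqrt 5 ^ n / Real.exp n) :=
        (abs_div_sub_one_lt_of_abs_lt_max (Real.exp_pos n) (by positivity) (by positivity) h1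
          (h3.trans_lt h2)).le
    _ ≤ 2 * 0.83 ^ n := by gcongr; exact sqrt_five_pow_div_exp_le n
    _ ≤ 4 * 0.83 ^ n := by gcongr; norm_num
end
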